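/- arXiv:2509.06435 — 7 statements merged into one kernel-verified Lean document; each statement's English description precedes it below -/
import Mathlib

section
/- Suppose W isolates a size-k common independent set I_k of matroids M₁ and M₂, and let s ∈ S. Then there exists a size-k common independent set I with s ∈ I Δ I_k if and only if the exchange graph 𝓔(M₁,M₂,I_k) contains a directed cycle through s. -/
/-- `I` is a common independent set of the matroids `M₁` and `M₂`. -/
def CommonIndep {α : Type*} (M₁ M₂ : Matroid α) (I : Finset α) : Prop :=
  M₁.Indep ↑I ∧ M₂.Indep ↑I

/-- The weight `W(I) = ∑_{s ∈ I} W(s)` of a set. -/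
def setW {α : Type*} (W : α → ℤ) (I : Finset α) : ℤ := ∑ x ∈ I, W x

/-- Adjacency in the exchange graph `𝓔(M₁,M₂,I)`: for `y ∈ I` and `x ∉ I` there is an
edge `(y,x)` iff `(I \ {y}) ∪ {x} ∈ 𝓘₁`, and an edge `(x,y)` iff `(I \ {y}) ∪ {x} ∈ 𝓘₂`. -/
def ExchAdj {α : Type*} [DecidableEq α] (M₁ M₂ : Matroid α) (I : Finset α) (u v : α) : Prop :=
  (u ∈ I ∧ v ∉ I ∧ M₁.Indep ↑(insert v (I.erase u))) ∨
  (u ∉ I ∧ v ∈ I ∧ M₂.Indep ↑(insert u (I.erase v)))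

/-- The vertex weights of the exchange graph: `l(s) = -W(s)` if `s ∈ I`, else `l(s) = W(s)`. -/
def exchWt {α : Type*} [DecidableEq α] (W : α → ℤ) (I : Finset α) (s : α) : ℤ :=
  if s ∈ I then -W s else W s

/-- The weight of a walk/path/cycle given by the vertex list `l`: the sum of the vertex
weights over `l`. -/
def listW {α : Type*} [DecidableEq α] (W : α → ℤ) (I : Finset α) (l : List α) : ℤ :=
  (l.map (exchWt W I)).sum

/-- `l` is (the vertex list of) a simple directed cycle for the adjacency relation `Adj`. -/
def IsCycle {α : Type*} (Adj : α → α → Prop) (l : List α) : Prop :=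
  ∃ h : l ≠ [], l.Chain' Adj ∧ Adj (l.getLast h) (l.head h) ∧ l.Nodup

/-- `x ∈ X₁`, i.e. `x ∉ I` and `I ∪ {x} ∈ 𝓘₁` (and analogously for `X₂` with `M₂`). -/
def memX {α : Type*} [DecidableEq α] (M : Matroid α) (I : Finset α) (x : α) : Prop :=
  x ∉ I ∧ M.Indep ↑(insert x I)

/-- `l` is (the vertex list of) a simple directed path from `X₁` to `X₂` in the exchange
graph `𝓔(M₁,M₂,I)`. -/
def IsXPath {α : Type*} [DecidableEq α] (M₁ M₂ : Matroid α) (I : Finset α) (l : List α) : Prop :=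
  ∃ h : l ≠ [], l.Chain' (ExchAdj M₁ M₂ I) ∧ l.Nodup ∧
    memX M₁ I (l.head h) ∧ memX M₂ I (l.getLast h)

/-- `I` is a minimum-weight common independent set of size `k` (not necessarily unique). -/
def IsMinWtOfSize {α : Type*} (M₁ M₂ : Matroid α) (W : α → ℤ) (k : ℕ) (I : Finset α) : Prop :=
  CommonIndep M₁ M₂ I ∧ I.card = k ∧
    ∀ J : Finset α, CommonIndep M₁ M₂ J → J.card = k → setW W I ≤ setW W J

/-- `W` isolates the size-`k` common independent set `I`: `I` is the unique minimum-weight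
common independent set of size `k`. -/
def Isolates {α : Type*} (M₁ M₂ : Matroid α) (W : α → ℤ) (k : ℕ) (I : Finset α) : Prop :=
  CommonIndep M₁ M₂ I ∧ I.card = k ∧
    ∀ J : Finset α, CommonIndep M₁ M₂ J → J.card = k → J ≠ I → setW W I < setW W J

/-- triangular exchange -/
theorem tri_exchange {α : Type*} [DecidableEq α] (M : Matroid α) (hE : M.E = Set.univ)
    (I : Finset α) (hI : M.Indep ↑I) (ν : α → α) (q : α → ℤ) (Y : Finset α) :
    Y ⊆ I → (∀ y ∈ Y, ν y ∉ I) → (∀ y ∈ Y, M.Indep ↑(insert (ν y) (I.erase y))) →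
    (∀ y ∈ Y, ∀ y' ∈ Y, y ≠ y' → M.Indep ↑(insert (ν y') (I.erase y)) → q y' < q y) →
    M.Indep ↑(I \ Y ∪ Y.image ν) := by
  induction Y using Finset.strongInduction with
  | H Y ih =>
    intro hY hν hind hq
    rcases Y.eq_empty_or_nonempty with rfl | hne
    · simpa using hI
    obtain ⟨y, hy, hmin⟩ := Y.exists_min_image q hne
    have h1 := ih (Y.erase y) (Finset.erase_ssubset hy)
      ((Finset.erase_subset _ _).trans hY)
      (fun a ha => hν a (Finset.mem_of_mem_erase ha))
      (fun a ha => hind a (Finset.mem_of_mem_erase ha))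
      (fun a ha b hb => hq a (Finset.mem_of_mem_erase ha) b (Finset.mem_of_mem_erase hb))
    have hIy : M.Indep ↑(I.erase y) := hI.subset (by simp)
    have hcl : ∀ y' ∈ Y, y' ≠ y → ν y' ∈ M.closure ↑(I.erase y) := by
      intro y' hy' hne'
      by_contra hc
      rw [hIy.notMem_closure_iff (by rw [hE]; trivial)] at hc
      have := hq y hy y' hy' (Ne.symm hne') (by simpa using hc.1)
      have := hmin y' hy'
      omega
    have hnot : ν y ∉ M.closure ↑(I.erase y) := by
      rw [hIy.notMem_closure_iff (by rw [hE]; trivial)]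
      refine ⟨by simpa using hind y hy, ?_⟩
      have := hν y hy
      simp [this]
    have hK : M.Indep ↑(I \ Y ∪ (Y.erase y).image ν) := by
      refine h1.subset ?_
      intro a
      simp
      grind
    have hKsub : (↑(I \ Y ∪ (Y.erase y).image ν) : Set α) ⊆ M.closure ↑(I.erase y) := by
      intro a ha
      simp only [Finset.coe_union, Finset.coe_sdiff, Set.mem_union, Finset.coe_image, Set.mem_image,
        Finset.mem_coe, Finset.mem_erase, Set.mem_sdiff] at ha
      rcases ha with ⟨ha, ha'⟩ | ⟨b, ⟨hb, hb'⟩, rfl⟩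
      · apply M.subset_closure _ (by rw [hE]; exact Set.subset_univ _)
        simp only [Finset.coe_erase, Set.mem_sdiff, Finset.mem_coe, Set.mem_singleton_iff]
        exact ⟨ha, fun h => ha' (h ▸ hy)⟩
      · exact hcl b hb' hb
    have hn2 : ν y ∉ M.closure ↑(I \ Y ∪ (Y.erase y).image ν) := fun h =>
      hnot (M.closure_subset_closure_of_subset_closure hKsub h)
    rw [hK.notMem_closure_iff (by rw [hE]; trivial)] at hn2
    refine hn2.1.subset ?_
    intro a
    simp
    grind

/-- Matching between two independent sets of equal size. -/
theorem exch_matching {α : Type*} [Fintype α] [DecidableEq α] (M : Matroid α)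
    (hE : M.E = Set.univ)
    (I J : Finset α) (hI : M.Indep ↑I) (hJ : M.Indep ↑J) (hc : I.card = J.card) :
    ∃ f : {x // x ∈ J \ I} ≃ {y // y ∈ I \ J}, ∀ x, M.Indep ↑(insert x.1 (I.erase (f x).1)) := by
  classical
  let t : {x // x ∈ J \ I} → Finset {y // y ∈ I \ J} := fun x =>
    Finset.univ.filter (fun y => M.Indep ↑(insert x.1 (I.erase y.1)))
  have hcard : (J \ I).card = (I \ J).card := by
    have := Finset.card_sdiff_add_card_inter I J
    have := Finset.card_sdiff_add_card_inter J I
    rw [Finset.inter_comm] at this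
    omega
  have hall : ∀ A : Finset {x // x ∈ J \ I}, A.card ≤ (A.biUnion t).card := by
    intro A
    by_cases hZ : A.biUnion t = Finset.univ
    · rw [hZ, Finset.card_univ, Fintype.card_coe, ← hcard]
      have := Finset.card_le_univ A
      rwa [Fintype.card_coe] at this
    obtain ⟨y0, hy0⟩ : ∃ y, y ∉ A.biUnion t := by
      by_contra! h
      exact hZ (Finset.eq_univ_iff_forall.2 h)
    let N : Finset α := (A.biUnion t).map (Function.Embedding.subtype _)
    let A' : Finset α := A.map (Function.Embedding.subtype _)
    have hN : N.card = (A.biUnion t).card := Finset.card_map _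
    have hA' : A'.card = A.card := Finset.card_map _
    have hNsub : N ⊆ I \ J := by
      intro a ha
      simp only [N, Finset.mem_map] at ha
      obtain ⟨b, -, rfl⟩ := ha
      exact b.2
    have hAsub : A' ⊆ J \ I := by
      intro a ha
      simp only [A', Finset.mem_map] at ha
      obtain ⟨b, -, rfl⟩ := ha
      exact b.2
    have key : ∀ x ∈ A', x ∈ M.closure (↑((I ∩ J) ∪ N) : Set α) := by
      intro x hx
      have hx2 := hAsub hx
      simp only [A', Finset.mem_map] at hx
      obtain ⟨x, hxA, rfl⟩ := hx
      have hne : Nonempty {y // y ∉ A.biUnion t} := ⟨⟨y0, hy0⟩⟩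
      have hcl := Matroid.Indep.closure_iInter_eq_biInter_closure_of_forall_subset
        (ι := {y // y ∉ A.biUnion t}) (M := M) (I := (↑I : Set α))
        (Js := fun y => ↑(I.erase y.1.1)) hI (by intro i; simp)
      have hsub : (⋂ y : {y // y ∉ A.biUnion t}, (↑(I.erase y.1.1) : Set α)) ⊆ ↑((I ∩ J) ∪ N) := by
        intro a ha
        simp only [Set.mem_iInter, Finset.mem_coe, Finset.mem_erase] at ha
        have haI := (ha ⟨y0, hy0⟩).2
        simp only [Finset.coe_union, Set.mem_union, Finset.mem_coe, Finset.mem_inter]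
        by_cases haJ : a ∈ J
        · exact Or.inl ⟨haI, haJ⟩
        · right
          have hm : a ∈ I \ J := Finset.mem_sdiff.2 ⟨haI, haJ⟩
          simp only [N, Finset.mem_map]
          refine ⟨⟨a, hm⟩, ?_, rfl⟩
          by_contra hcon
          exact (ha ⟨⟨a, hm⟩, hcon⟩).1 rfl
      apply M.closure_subset_closure hsub
      rw [hcl]
      simp only [Set.mem_iInter]
      rintro ⟨y, hy⟩
      have hIy : M.Indep ↑(I.erase y.1) := hI.subset (by simp)
      by_contra hcon
      rw [hIy.notMem_closure_iff (by rw [hE]; trivial)] at hcon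
      apply hy
      rw [Finset.mem_biUnion]
      exact ⟨x, hxA, by simpa [t] using hcon.1⟩
    have hsubcl : (↑((I ∩ J) ∪ A') : Set α) ⊆ M.closure (↑((I ∩ J) ∪ N) : Set α) := by
      intro a ha
      rcases Finset.mem_union.1 (Finset.mem_coe.1 ha) with h | h
      · apply M.subset_closure _ (by rw [hE]; exact Set.subset_univ _)
        exact Finset.mem_coe.2 (Finset.mem_union_left _ h)
      · exact key a h
    have hi1 : M.Indep (↑((I ∩ J) ∪ A') : Set α) := by
      refine hJ.subset ?_
      intro a ha
      have := @hAsub a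
      grind
    have hi2 : M.Indep (↑((I ∩ J) ∪ N) : Set α) := by
      refine hI.subset ?_
      intro a ha
      have := @hNsub a
      grind
    have hle := hi1.encard_le_eRk_of_subset hsubcl
    rw [M.eRk_closure_eq, hi2.eRk_eq_encard, Set.encard_coe_eq_coe_finsetCard,
      Set.encard_coe_eq_coe_finsetCard] at hle
    have hle' : ((I ∩ J) ∪ A').card ≤ ((I ∩ J) ∪ N).card := by exact_mod_cast hle
    rw [Finset.card_union_of_disjoint, Finset.card_union_of_disjoint] at hle'
    · omega
    · rw [Finset.disjoint_left]; intro a ha hb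
      have := hNsub hb
      grind
    · rw [Finset.disjoint_left]; intro a ha hb
      have := hAsub hb
      grind
  obtain ⟨f, hf, hft⟩ := (Finset.all_card_le_biUnion_card_iff_exists_injective t).1 hall
  have hb : Function.Bijective f := by
    rw [Fintype.bijective_iff_injective_and_card]
    refine ⟨hf, by rw [Fintype.card_coe, Fintype.card_coe]; exact hcard⟩
  refine ⟨Equiv.ofBijective f hb, fun x => ?_⟩
  have := hft x
  simpa [t] using this

/-- Lists from periodic sequences -/
theorem isCycle_of_seq {α : Type*} (Adj : α → α → Prop) (c : ℕ → α) (m : ℕ) (hm : 0 < m)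
    (hinj : ∀ i < m, ∀ j < m, c i = c j → i = j)
    (hadj : ∀ i, i + 1 < m → Adj (c i) (c (i + 1))) (hlast : Adj (c (m - 1)) (c 0)) :
    IsCycle Adj ((List.range m).map c) := by
  have hne : (List.range m).map c ≠ [] := by simp; omega
  refine ⟨hne, ?_, ?_, ?_⟩
  · show List.IsChain _ _
    rw [List.isChain_iff_getElem]
    intro i hi
    simp at hi ⊢
    exact hadj i hi
  · rw [List.getLast_eq_getElem, List.head_eq_getElem]
    simpa using hlast
  · rw [List.nodup_map_iff_inj_on List.nodup_range]
    intro x hx y hy h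
    exact hinj x (by simpa using hx) y (by simpa using hy) h

theorem seq_of_isCycle {α : Type*} (Adj : α → α → Prop) (l : List α) (h : IsCycle Adj l) :
    ∃ c : ℕ → α, 0 < l.length ∧ (∀ i j, c i = c j ↔ i % l.length = j % l.length) ∧
      (∀ i, Adj (c i) (c (i + 1))) ∧ (List.range l.length).map c = l := by
  obtain ⟨hne, hch, hlast, hnd⟩ := h
  have hpos : 0 < l.length := List.length_pos_iff.2 hne
  refine ⟨fun i => l[i % l.length]'(Nat.mod_lt _ hpos), hpos, ?_, ?_, ?_⟩
  · intro i j
    exact hnd.getElem_inj_iff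
  · intro i
    replace hch : List.IsChain Adj l := hch
    rw [List.isChain_iff_getElem] at hch
    rw [List.getLast_eq_getElem, List.head_eq_getElem] at hlast
    have hlt := Nat.mod_lt i hpos
    by_cases hi : i % l.length + 1 < l.length
    · have := hch (i % l.length) hi
      have e : (i + 1) % l.length = i % l.length + 1 := by
        rw [Nat.add_mod, Nat.mod_eq_of_lt (a := 1) (by omega), Nat.mod_eq_of_lt hi]
      simpa [e] using this
    · have e1 : i % l.length = l.length - 1 := by omega
      have e : (i + 1) % l.length = 0 := by
        rw [← Nat.mod_add_mod, e1, Nat.sub_add_cancel hpos, Nat.mod_self]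
      simpa [e, e1] using hlast
  · apply List.ext_getElem
    · simp
    · intro i h1 h2
      simp [Nat.mod_eq_of_lt h2]

theorem sum_range_map {α : Type*} [DecidableEq α] (f : α → ℤ) (c : ℕ → α) (m : ℕ)
    (hinj : ∀ i < m, ∀ j < m, c i = c j → i = j) :
    ∑ x ∈ ((List.range m).map c).toFinset, f x = ∑ j ∈ Finset.range m, f (c j) := by
  have e : ((List.range m).map c).toFinset = (Finset.range m).image c := by
    ext; simp
  rw [e, Finset.sum_image]
  intro i hi j hj h
  exact hinj i (by simpa using hi) j (by simpa using hj) h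

theorem core_indep {α : Type*} [Fintype α] [DecidableEq α]
    (M₁ M₂ : Matroid α) (hE₁ : M₁.E = Set.univ) (hE₂ : M₂.E = Set.univ)
    (I : Finset α) (hI : CommonIndep M₁ M₂ I) (l : List α)
    (hl : IsCycle (ExchAdj M₁ M₂ I) l) (f : α → ℤ) (h0 : ∑ x ∈ l.toFinset, f x = 0)
    (hpos : ∀ l', IsCycle (ExchAdj M₁ M₂ I) l' → l'.toFinset ⊂ l.toFinset →
      0 < ∑ x ∈ l'.toFinset, f x) :
    CommonIndep M₁ M₂ (symmDiff I l.toFinset) ∧ (symmDiff I l.toFinset).card = I.card := by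
  classical
  obtain ⟨c, hn, hc, hadj, hcl⟩ := seq_of_isCycle _ l hl
  generalize hnn : l.length = n at hn hc hcl
  have hmem : ∀ v, v ∈ l ↔ ∃ i, c i = v := by
    intro v
    rw [← hcl, List.mem_map]
    constructor
    · rintro ⟨i, -, h⟩; exact ⟨i, h⟩
    · rintro ⟨i, h⟩
      refine ⟨i % n, by simpa using Nat.mod_lt _ hn, ?_⟩
      rw [← h, hc, Nat.mod_mod]
  have hinj : ∀ a, ∀ i < n, ∀ j < n, c (a + i) = c (a + j) → i = j := by
    intro a i hi j hj h
    rw [hc] at h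
    have h' : i ≡ j [MOD n] := Nat.ModEq.add_left_cancel' a h
    exact h'.eq_of_lt_of_lt hi hj
  have hsum0 : ∑ j ∈ Finset.range n, f (c j) = 0 := by
    rw [← h0, ← hcl, sum_range_map]
    simpa using hinj 0
  let P : ℕ → ℤ := fun i => ∑ j ∈ Finset.range i, f (c j)
  have hPadd : ∀ a m, P (a + m) = P a + ∑ j ∈ Finset.range m, f (c (a + j)) := by
    intro a m
    exact Finset.sum_range_add (fun j => f (c j)) a m
  have hPn : ∀ i, P (i + n) = P i := by
    intro i
    rw [add_comm, hPadd]
    have : P n = 0 := hsum0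
    rw [this, zero_add]
    refine Finset.sum_congr rfl fun j _ => ?_
    congr 1
    rw [hc, Nat.add_mod_left]
  have hPk : ∀ i k, P (i + n * k) = P i := by
    intro i k
    induction k with
    | zero => simp
    | succ k ih => rw [Nat.mul_succ, ← add_assoc, hPn, ih]
  have hPmod : ∀ i j, i % n = j % n → P i = P j := by
    intro i j h
    rw [← Nat.mod_add_div i n, ← Nat.mod_add_div j n, hPk, hPk, h]
  have F : ∀ a b, ExchAdj M₁ M₂ I (c b) (c a) → c a = c (b + 1) ∨ P a < P (b + 1) := by
    intro a b hab
    -- choose m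
    obtain ⟨m, hm0, hmn, hm⟩ : ∃ m, 0 < m ∧ m ≤ n ∧ (a + m) % n = (b + 1) % n := by
      have h1 := Nat.mod_lt a hn
      refine ⟨(b + (n - a % n)) % n + 1, by omega, Nat.mod_lt _ hn, ?_⟩
      have e1 : a + ((b + (n - a % n)) % n + 1) ≡ a % n + ((b + (n - a % n)) + 1) [MOD n] :=
        Nat.ModEq.add (Nat.mod_modEq a n).symm ((Nat.mod_modEq _ n).add_right 1)
      have e2 : a % n + ((b + (n - a % n)) + 1) = b + 1 + n := by omega
      rw [e2] at e1
      exact e1.trans (by simp [Nat.ModEq])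
    rcases hmn.eq_or_lt with rfl | hlt
    · left
      rw [hc, ← hm, Nat.add_mod_right]
    · right
      rw [← hPmod _ _ hm, hPadd]
      have hcy : IsCycle (ExchAdj M₁ M₂ I) ((List.range m).map (fun i => c (a + i))) := by
        apply isCycle_of_seq _ _ _ hm0
        · intro i hi j hj h
          exact hinj a i (by omega) j (by omega) h
        · intro i hi
          exact hadj (a + i)
        · have : c (a + (m - 1)) = c b := by
            rw [hc]
            have : a + (m - 1) + 1 ≡ b + 1 [MOD n] := by
              rw [add_assoc, Nat.sub_add_cancel hm0]; exact hm
            exact Nat.ModEq.add_right_cancel' 1 this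
          simp only [this, add_zero]
          exact hab
      have := hpos _ hcy (by
        rw [Finset.ssubset_iff_of_subset]
        · refine ⟨c (a + m), ?_, ?_⟩
          · rw [List.mem_toFinset, hmem]; exact ⟨_, rfl⟩
          · simp only [List.mem_toFinset, List.mem_map, List.mem_range, not_exists, not_and]
            intro i hi h
            have := hinj a i (by omega) m hlt h
            omega
        · intro v hv
          simp only [List.mem_toFinset, List.mem_map] at hv
          obtain ⟨i, -, h⟩ := hv
          rw [List.mem_toFinset, hmem]; exact ⟨_, h⟩)
      rw [sum_range_map _ _ _ (fun i hi j hj h => hinj a i (by omega) j (by omega) h)] at this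
      linarith
  have hbip : ∀ i, c i ∈ I ↔ c (i + 1) ∉ I := by
    intro i
    rcases hadj i with h | h
    · exact ⟨fun _ => h.2.1, fun _ => h.1⟩
    · exact ⟨fun h' => absurd h' h.1, fun h' => absurd h.2.1 h'⟩
  have hcn : ∀ i, c (i + n - 1 + 1) = c i := by
    intro i
    rw [hc, Nat.sub_add_cancel (by omega), Nat.add_mod_right]
  have hsucc : ∀ i j, c (i + 1) = c (j + 1) → c i = c j := by
    intro i j h
    rw [hc] at h ⊢
    exact Nat.ModEq.add_right_cancel' 1 h
  have hexi : ∀ v, ∃ i, v ∈ l → c i = v := by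
    intro v
    by_cases hv : v ∈ l
    · obtain ⟨i, hi⟩ := (hmem v).1 hv
      exact ⟨i, fun _ => hi⟩
    · exact ⟨0, fun h => absurd h hv⟩
  choose idx hidx using hexi
  have hYmem : ∀ y, y ∈ I ∩ l.toFinset → y ∈ I ∧ c (idx y) = y := by
    intro y hy
    rw [Finset.mem_inter, List.mem_toFinset] at hy
    exact ⟨hy.1, hidx y hy.2⟩
  have hM1 := tri_exchange M₁ hE₁ I hI.1 (fun y => c (idx y + 1)) (fun y => P (idx y + 1))
    (I ∩ l.toFinset) Finset.inter_subset_left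
    (by
      intro y hy
      obtain ⟨h1, h2⟩ := hYmem y hy
      exact (hbip _).1 (h2.symm ▸ h1))
    (by
      intro y hy
      obtain ⟨h1, h2⟩ := hYmem y hy
      have := hadj (idx y)
      rw [h2] at this
      rcases this with h | h
      · exact h.2.2
      · exact absurd h1 h.1)
    (by
      intro y hy y' hy' hne hind
      obtain ⟨h1, h2⟩ := hYmem y hy
      obtain ⟨h1', h2'⟩ := hYmem y' hy'
      rcases F (idx y' + 1) (idx y) (Or.inl ⟨h2.symm ▸ h1, (hbip _).1 (h2'.symm ▸ h1'),
        by rw [h2]; exact hind⟩) with h | h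
      · exact absurd (by rw [← h2, ← h2']; exact (hsucc _ _ h).symm) hne
      · exact h)
  have hM2 := tri_exchange M₂ hE₂ I hI.2 (fun y => c (idx y + n - 1)) (fun y => - P (idx y))
    (I ∩ l.toFinset) Finset.inter_subset_left
    (by
      intro y hy hmm
      obtain ⟨h1, h2⟩ := hYmem y hy
      have := (hbip _).1 hmm
      rw [hcn, h2] at this
      exact this h1)
    (by
      intro y hy
      obtain ⟨h1, h2⟩ := hYmem y hy
      have := hadj (idx y + n - 1)
      rw [hcn, h2] at this
      rcases this with h | h
      · exact absurd h1 h.2.1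
      · exact h.2.2)
    (by
      intro y hy y' hy' hne hind
      obtain ⟨h1, h2⟩ := hYmem y hy
      obtain ⟨h1', h2'⟩ := hYmem y' hy'
      have hnot : c (idx y' + n - 1) ∉ I := by
        intro hmm
        have := (hbip _).1 hmm
        rw [hcn, h2'] at this
        exact this h1'
      rcases F (idx y) (idx y' + n - 1) (Or.inr ⟨hnot, h2.symm ▸ h1,
        by rw [h2]; exact hind⟩) with h | h
      · rw [hcn, h2, h2'] at h
        exact absurd h hne
      · rw [Nat.sub_add_cancel (by omega), hPn] at h
        simpa using h)
  have hset1 : I \ (I ∩ l.toFinset) ∪ (I ∩ l.toFinset).image (fun y => c (idx y + 1)) =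
      symmDiff I l.toFinset := by
    ext v
    simp only [Finset.mem_union, Finset.mem_sdiff, Finset.mem_image, Finset.mem_symmDiff]
    constructor
    · rintro (h | ⟨y, hy, rfl⟩)
      · left
        simp only [Finset.mem_inter] at h
        tauto
      · right
        obtain ⟨h1, h2⟩ := hYmem y hy
        exact ⟨by rw [List.mem_toFinset, hmem]; exact ⟨_, rfl⟩, (hbip _).1 (h2.symm ▸ h1)⟩
    · rintro (h | h)
      · left
        simp only [Finset.mem_inter]
        tauto
      · right
        have hv := hidx v (List.mem_toFinset.1 h.1)
        have hyl : c (idx v + n - 1) ∈ l := (hmem _).2 ⟨_, rfl⟩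
        refine ⟨c (idx v + n - 1), ?_, ?_⟩
        · rw [Finset.mem_inter, List.mem_toFinset]
          exact ⟨(hbip _).2 (by rw [hcn, hv]; exact h.2), hyl⟩
        · have := hidx _ hyl
          refine Eq.trans ?_ ((hcn (idx v)).trans hv)
          rw [hc] at this ⊢
          exact Nat.ModEq.add_right 1 this
  have hset2 : I \ (I ∩ l.toFinset) ∪ (I ∩ l.toFinset).image (fun y => c (idx y + n - 1)) =
      symmDiff I l.toFinset := by
    ext v
    simp only [Finset.mem_union, Finset.mem_sdiff, Finset.mem_image, Finset.mem_symmDiff]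
    constructor
    · rintro (h | ⟨y, hy, rfl⟩)
      · left
        simp only [Finset.mem_inter] at h
        tauto
      · right
        obtain ⟨h1, h2⟩ := hYmem y hy
        refine ⟨by rw [List.mem_toFinset, hmem]; exact ⟨_, rfl⟩, fun hmm => ?_⟩
        have := (hbip _).1 hmm
        rw [hcn, h2] at this
        exact this h1
    · rintro (h | h)
      · left
        simp only [Finset.mem_inter]
        tauto
      · right
        have hv := hidx v (List.mem_toFinset.1 h.1)
        have hyl : c (idx v + 1) ∈ l := (hmem _).2 ⟨_, rfl⟩
        refine ⟨c (idx v + 1), ?_, ?_⟩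
        · rw [Finset.mem_inter, List.mem_toFinset]
          refine ⟨?_, hyl⟩
          by_contra hcon
          have := (hbip (idx v)).2 hcon
          rw [hv] at this
          exact h.2 this
        · have := hidx _ hyl
          rw [← hv]
          apply hsucc
          rw [hcn, hv]
          exact this
  refine ⟨⟨hset1 ▸ hM1, hset2 ▸ hM2⟩, ?_⟩
  rw [← hset1, Finset.card_union_of_disjoint, Finset.card_image_of_injOn]
  · rw [Finset.card_sdiff_of_subset Finset.inter_subset_left]
    have := Finset.card_le_card (Finset.inter_subset_left (s₁ := I) (s₂ := l.toFinset))
    omega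
  · intro y hy y' hy' h
    obtain ⟨h1, h2⟩ := hYmem y hy
    obtain ⟨h1', h2'⟩ := hYmem y' hy'
    rw [← h2, ← h2']
    exact hsucc _ _ h
  · rw [Finset.disjoint_left]
    intro v hv hv'
    rw [Finset.mem_image] at hv'
    obtain ⟨y, hy, rfl⟩ := hv'
    obtain ⟨h1, h2⟩ := hYmem y hy
    exact (hbip _).1 (h2.symm ▸ h1) (Finset.mem_sdiff.1 hv).1

theorem setW_symmDiff {α : Type*} [DecidableEq α] (W : α → ℤ) (I T : Finset α) :
    setW W (symmDiff I T) = setW W I + ∑ x ∈ T, exchWt W I x := by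
  have h1 : setW W (symmDiff I T) = ∑ x ∈ I \ T, W x + ∑ x ∈ T \ I, W x := by
    unfold setW
    rw [symmDiff_def, Finset.sup_eq_union, Finset.sum_union]
    rw [Finset.disjoint_left]; intro a ha hb
    grind
  have h2 : setW W I = ∑ x ∈ I ∩ T, W x + ∑ x ∈ I \ T, W x :=
    (Finset.sum_inter_add_sum_sdiff I T W).symm
  have h3 : ∑ x ∈ T, exchWt W I x = - ∑ x ∈ T ∩ I, W x + ∑ x ∈ T \ I, W x := by
    rw [← Finset.sum_inter_add_sum_sdiff T I, ← Finset.sum_neg_distrib]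
    congr 1
    · refine Finset.sum_congr rfl fun x hx => ?_
      simp [exchWt, (Finset.mem_inter.1 hx).2]
    · refine Finset.sum_congr rfl fun x hx => ?_
      simp [exchWt, (Finset.mem_sdiff.1 hx).2]
  rw [h1, h2, h3, Finset.inter_comm]
  ring

theorem cycle_of_symmDiff {α : Type*} [Fintype α] [DecidableEq α]
    (M₁ M₂ : Matroid α) (hE₁ : M₁.E = Set.univ) (hE₂ : M₂.E = Set.univ)
    (I J : Finset α) (hI : CommonIndep M₁ M₂ I) (hJ : CommonIndep M₁ M₂ J)
    (hc : I.card = J.card) (s : α) (hs : s ∈ symmDiff J I) :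
    ∃ l : List α, IsCycle (ExchAdj M₁ M₂ I) l ∧ s ∈ l := by
  classical
  obtain ⟨f₁, hf₁⟩ := exch_matching M₁ hE₁ I J hI.1 hJ.1 hc
  obtain ⟨f₂, hf₂⟩ := exch_matching M₂ hE₂ I J hI.2 hJ.2 hc
  let e : {x // x ∈ J \ I} ⊕ {y // y ∈ I \ J} ≃ {x // x ∈ J \ I} ⊕ {y // y ∈ I \ J} :=
    (Equiv.sumCongr f₂ f₁.symm).trans (Equiv.sumComm _ _)
  let val : {x // x ∈ J \ I} ⊕ {y // y ∈ I \ J} → α := Sum.elim (fun x => x.1) (fun y => y.1)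
  have hval : Function.Injective val := by
    rintro (⟨x, hx⟩ | ⟨x, hx⟩) (⟨y, hy⟩ | ⟨y, hy⟩) h <;>
      simp only [val, Sum.elim_inl, Sum.elim_inr] at h <;> subst h
    · rfl
    · rw [Finset.mem_sdiff] at hx hy; exact absurd hx.1 hy.2
    · rw [Finset.mem_sdiff] at hx hy; exact absurd hx.1 hy.2
    · rfl
  have hadj : ∀ z, ExchAdj M₁ M₂ I (val z) (val (e z)) := by
    rintro (x | y)
    · right
      exact ⟨(Finset.mem_sdiff.1 x.2).2, (Finset.mem_sdiff.1 (f₂ x).2).1, hf₂ x⟩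
    · left
      refine ⟨(Finset.mem_sdiff.1 y.2).1, (Finset.mem_sdiff.1 (f₁.symm y).2).2, ?_⟩
      have := hf₁ (f₁.symm y)
      rw [Equiv.apply_symm_apply] at this
      exact this
  obtain ⟨z, rfl⟩ : ∃ z, val z = s := by
    rw [Finset.mem_symmDiff] at hs
    rcases hs with h | h
    · exact ⟨Sum.inl ⟨s, Finset.mem_sdiff.2 h⟩, rfl⟩
    · exact ⟨Sum.inr ⟨s, Finset.mem_sdiff.2 h⟩, rfl⟩
  have hper : z ∈ Function.periodicPts e := e.injective.mem_periodicPts z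
  have hm := Function.minimalPeriod_pos_of_mem_periodicPts hper
  refine ⟨_, isCycle_of_seq _ (fun i => val (e^[i] z)) (Function.minimalPeriod e z) hm ?_ ?_ ?_, ?_⟩
  · intro i hi j hj h
    exact (Function.iterate_eq_iterate_iff_of_lt_minimalPeriod hi hj).1 (hval h)
  · intro i _
    simp only [Function.iterate_succ_apply']
    exact hadj _
  · have h1 := hadj (e^[Function.minimalPeriod e z - 1] z)
    rw [← Function.iterate_succ_apply' (⇑e), Nat.succ_eq_add_one, Nat.sub_add_cancel hm,
      Function.iterate_minimalPeriod] at h1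
    exact h1
  · rw [List.mem_map]
    exact ⟨0, by simpa using hm, rfl⟩

/-- Suppose `W` isolates a size-`k` common independent set `I_k` and `s ∈ S`. Then there is
a size-`k` common independent set `I` with `s ∈ I Δ I_k` iff the exchange graph
`𝓔(M₁,M₂,I_k)` contains a directed cycle through `s`. -/
theorem exists_symmDiff_iff_cycle {α : Type*} [Fintype α] [DecidableEq α]
    (M₁ M₂ : Matroid α) (hE₁ : M₁.E = Set.univ) (hE₂ : M₂.E = Set.univ)
    (W : α → ℤ) (k : ℕ) (Ik : Finset α) (hiso : Isolates M₁ M₂ W k Ik) (s : α) :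
    (∃ I : Finset α, CommonIndep M₁ M₂ I ∧ I.card = k ∧ s ∈ symmDiff I Ik) ↔
    (∃ l : List α, IsCycle (ExchAdj M₁ M₂ Ik) l ∧ s ∈ l) := by
  classical
  obtain ⟨hIk, hk, huniq⟩ := hiso
  constructor
  · rintro ⟨I, hI, hIc, hs⟩
    exact cycle_of_symmDiff M₁ M₂ hE₁ hE₂ Ik I hIk hI (hk.trans hIc.symm) s hs
  · rintro ⟨l, hl, hsl⟩
    -- all cycles have positive weight
    have hA : ∀ l, IsCycle (ExchAdj M₁ M₂ Ik) l → 0 < ∑ x ∈ l.toFinset, exchWt W Ik x := by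
      by_contra! hcon
      obtain ⟨l0, hl0, hw0⟩ := hcon
      let 𝒯 : Finset (Finset α) := Finset.univ.filter (fun T => ∃ l,
        IsCycle (ExchAdj M₁ M₂ Ik) l ∧ l.toFinset = T ∧ ∑ x ∈ T, exchWt W Ik x ≤ 0)
      obtain ⟨T, hT, hmin⟩ := 𝒯.exists_min_image Finset.card
        ⟨l0.toFinset, by simp only [𝒯, Finset.mem_filter_univ]; exact ⟨l0, hl0, rfl, hw0⟩⟩
      simp only [𝒯, Finset.mem_filter_univ] at hT hmin
      obtain ⟨l1, hl1, rfl, hw1⟩ := hT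
      obtain ⟨v, hv⟩ : ∃ v, v ∈ l1 := List.exists_mem_of_ne_nil _ hl1.choose
      have := core_indep M₁ M₂ hE₁ hE₂ Ik hIk l1 hl1
        (fun x => exchWt W Ik x + if x = v then - ∑ x ∈ l1.toFinset, exchWt W Ik x else 0)
        (by rw [Finset.sum_add_distrib, Finset.sum_ite_eq', if_pos (List.mem_toFinset.2 hv)]
            ring)
        (by
          intro l' hl' hss
          have h1 : 0 < ∑ x ∈ l'.toFinset, exchWt W Ik x := by
            by_contra! hle
            have := hmin _ ⟨l', hl', rfl, hle⟩
            have := Finset.card_lt_card hss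
            omega
          rw [Finset.sum_add_distrib, Finset.sum_ite_eq']
          split_ifs <;> linarith)
      have hlt := huniq _ this.1 (this.2.trans hk) (by
        intro h
        rw [symmDiff_eq_left] at h
        have := List.mem_toFinset.2 hv
        rw [h] at this
        simp at this)
      rw [setW_symmDiff] at hlt
      linarith
    let 𝒯 : Finset (Finset α) := Finset.univ.filter (fun T => ∃ l,
        IsCycle (ExchAdj M₁ M₂ Ik) l ∧ l.toFinset = T ∧ s ∈ T)
    obtain ⟨T, hT, hmin⟩ := 𝒯.exists_min_image
        (fun T => toLex (∑ x ∈ T, exchWt W Ik x, T.card))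
        ⟨l.toFinset, by
          simp only [𝒯, Finset.mem_filter_univ]; exact ⟨l, hl, rfl, List.mem_toFinset.2 hsl⟩⟩
    simp only [𝒯, Finset.mem_filter_univ] at hT hmin
    obtain ⟨l1, hl1, rfl, hs1⟩ := hT
    have := core_indep M₁ M₂ hE₁ hE₂ Ik hIk l1 hl1
        (fun x => exchWt W Ik x + if x = s then - ∑ x ∈ l1.toFinset, exchWt W Ik x else 0)
        (by rw [Finset.sum_add_distrib, Finset.sum_ite_eq', if_pos hs1]
            ring)
        (by
          intro l' hl' hss
          have h1 := hA l' hl'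
          rw [Finset.sum_add_distrib, Finset.sum_ite_eq']
          split_ifs with h
          · have h2 := hmin _ ⟨l', hl', rfl, h⟩
            have h3 := Finset.card_lt_card hss
            rw [Prod.Lex.toLex_le_toLex] at h2
            rcases h2 with h2 | h2
            · simp only at h2
              linarith
            · simp only at h2
              omega
          · linarith)
    refine ⟨_, this.1, this.2.trans hk, ?_⟩
    rw [symmDiff_comm, symmDiff_symmDiff_cancel_left]
    exact hs1
end

section
/- Suppose matroids M₁ and M₂ have some common independent set of size k+1, and let s ∈ S with {s} ∈ 𝓘₁ ∩ 𝓘₂. Then s is a (k+1)-threshold element if and only if the following three conditions hold: M₁↾s and M₂↾s have a common independent set of size k; M₁ − s and M₂ − s have a common independent set of size k+1; and min_k(M₁↾s, M₂↾s) + W(s) = min_{k+1}(M₁ − s, M₂ − s). -/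
/-- `s` is a `(k+1)`-threshold element: there are two minimum-weight size-`(k+1)` common
independent sets `I` and `I'` with `s ∈ I` and `s ∉ I'`. -/
def IsThreshold {α : Type*} (M₁ M₂ : Matroid α) (W : α → ℤ) (k : ℕ) (s : α) : Prop :=
  ∃ I I' : Finset α, IsMinWtOfSize M₁ M₂ W (k + 1) I ∧ IsMinWtOfSize M₁ M₂ W (k + 1) I' ∧
    s ∈ I ∧ s ∉ I'

/-- `I` is a common independent set of the inclusion matroids `M₁↾s` and `M₂↾s`:
`I ⊆ S \ {s}` and `I ∪ {s}` is independent in both `M₁` and `M₂`. -/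
def InclCI {α : Type*} [DecidableEq α] (M₁ M₂ : Matroid α) (s : α) (I : Finset α) : Prop :=
  s ∉ I ∧ M₁.Indep ↑(insert s I) ∧ M₂.Indep ↑(insert s I)

/-- `I` is a common independent set of the exclusion matroids `M₁ − s` and `M₂ − s`:
`I ⊆ S \ {s}` and `I` is independent in both `M₁` and `M₂`. -/
def ExclCI {α : Type*} (M₁ M₂ : Matroid α) (s : α) (I : Finset α) : Prop :=
  s ∉ I ∧ M₁.Indep ↑I ∧ M₂.Indep ↑I

/-- Suppose a size-`(k+1)` common independent set of `M₁`, `M₂` exists and `{s} ∈ 𝓘₁ ∩ 𝓘₂`.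
Then `s` is a `(k+1)`-threshold element iff: `M₁↾s` and `M₂↾s` have a common independent set
of size `k`; `M₁ − s` and `M₂ − s` have a common independent set of size `k+1`; and
`min_k(M₁↾s, M₂↾s) + W(s) = min_{k+1}(M₁ − s, M₂ − s)`. -/
theorem threshold_iff_incl_excl {α : Type*} [Fintype α] [DecidableEq α]
    (M₁ M₂ : Matroid α) (hE₁ : M₁.E = Set.univ) (hE₂ : M₂.E = Set.univ)
    (W : α → ℤ) (k : ℕ)
    (hex : ∃ J : Finset α, CommonIndep M₁ M₂ J ∧ J.card = k + 1)
    (s : α) (hs₁ : M₁.Indep {s}) (hs₂ : M₂.Indep {s}) :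
    IsThreshold M₁ M₂ W k s ↔
      ((∃ I : Finset α, InclCI M₁ M₂ s I ∧ I.card = k) ∧
       (∃ I : Finset α, ExclCI M₁ M₂ s I ∧ I.card = k + 1) ∧
       ∃ a b : ℤ,
         IsLeast {w : ℤ | ∃ I : Finset α, InclCI M₁ M₂ s I ∧ I.card = k ∧ setW W I = w} a ∧
         IsLeast {w : ℤ | ∃ I : Finset α, ExclCI M₁ M₂ s I ∧ I.card = k + 1 ∧ setW W I = w} b ∧
         a + W s = b) := by
  have hins : ∀ I : Finset α, s ∉ I → setW W (insert s I) = setW W I + W s := by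
    intro I h
    simp only [setW]
    rw [Finset.sum_insert h, add_comm]
  have hera : ∀ I : Finset α, s ∈ I → insert s (I.erase s) = I := fun I h =>
    Finset.insert_erase h
  constructor
  · rintro ⟨I, I', ⟨hI, hIc, hIm⟩, ⟨hI', hIc', hIm'⟩, hsI, hsI'⟩
    have hE : InclCI M₁ M₂ s (I.erase s) := by
      refine ⟨Finset.notMem_erase s I, ?_, ?_⟩
      · rw [hera I hsI]; exact hI.1
      · rw [hera I hsI]; exact hI.2
    have hEc : (I.erase s).card = k := by
      rw [Finset.card_erase_of_mem hsI, hIc]; rfl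
    have hEw : setW W I = setW W (I.erase s) + W s := by
      rw [← hins _ (Finset.notMem_erase s I), hera I hsI]
    refine ⟨⟨_, hE, hEc⟩, ⟨I', ⟨hsI', hI'.1, hI'.2⟩, hIc'⟩, setW W (I.erase s), setW W I',
      ⟨⟨_, hE, hEc, rfl⟩, ?_⟩, ⟨⟨I', ⟨hsI', hI'.1, hI'.2⟩, hIc', rfl⟩, ?_⟩, ?_⟩
    · rintro w ⟨J, ⟨hJs, hJ⟩, hJc, rfl⟩
      have := hIm (insert s J) hJ (by rw [Finset.card_insert_of_notMem hJs, hJc])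
      rw [hins J hJs, hEw] at this
      linarith
    · rintro w ⟨J, ⟨hJs, hJ⟩, hJc, rfl⟩
      exact hIm' J hJ hJc
    · rw [← hEw]
      exact le_antisymm (hIm I' hI' hIc') (hIm' I hI hIc)
  · rintro ⟨-, -, a, b, ⟨⟨I, ⟨hIs, hI⟩, hIc, rfl⟩, ha⟩, ⟨⟨I', ⟨hIs', hI'⟩, hIc', rfl⟩, hb⟩, hab⟩
    have key : ∀ J : Finset α, CommonIndep M₁ M₂ J → J.card = k + 1 →
        setW W I' ≤ setW W J := by
      intro J hJ hJc
      by_cases hsJ : s ∈ J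
      · have h1 := ha ⟨J.erase s, ⟨Finset.notMem_erase s J, by
          rw [hera J hsJ]; exact hJ⟩, by rw [Finset.card_erase_of_mem hsJ, hJc]; rfl, rfl⟩
        have h2 := hins _ (Finset.notMem_erase s J)
        rw [hera J hsJ] at h2
        linarith
      · exact hb ⟨J, ⟨hsJ, hJ⟩, hJc, rfl⟩
    refine ⟨insert s I, I', ⟨hI, by rw [Finset.card_insert_of_notMem hIs, hIc], ?_⟩,
      ⟨hI', hIc', key⟩, Finset.mem_insert_self s I, hIs'⟩
    rw [hins I hIs, hab]
    exact key
end

section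
/- Suppose W isolates a size-k common independent set of matroids M₁ and M₂, some common independent set of size k+1 exists, and s is a (k+1)-threshold element with {s} ∈ 𝓘₁ ∩ 𝓘₂. Then min_{k+1}(M₁,M₂) = min_{k+1}(M₁ − s, M₂ − s) and min_{k+1}(M₁,M₂) − W(s) = min_k(M₁↾s, M₂↾s). In particular, W(s) = min_{k+1}(M₁ − s, M₂ − s) − min_k(M₁↾s, M₂↾s), so W(s) is determined by M₁, M₂, s, k and the restriction of W to S ∖ {s}. -/
/-- Suppose `W` isolates a size-`k` common independent set, some size-`(k+1)` common
independent set exists, and `s` is a `(k+1)`-threshold element with `{s} ∈ 𝓘₁ ∩ 𝓘₂`. Then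
`min_{k+1}(M₁,M₂) = min_{k+1}(M₁ − s, M₂ − s)` and
`min_{k+1}(M₁,M₂) − W(s) = min_k(M₁↾s, M₂↾s)`; in particular
`W(s) = min_{k+1}(M₁ − s, M₂ − s) − min_k(M₁↾s, M₂↾s)`. -/
theorem threshold_weight_recovery {α : Type*} [Fintype α] [DecidableEq α]
    (M₁ M₂ : Matroid α) (hE₁ : M₁.E = Set.univ) (hE₂ : M₂.E = Set.univ)
    (W : α → ℤ) (k : ℕ) (hiso : ∃ Ik : Finset α, Isolates M₁ M₂ W k Ik)
    (hex : ∃ J : Finset α, CommonIndep M₁ M₂ J ∧ J.card = k + 1)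
    (s : α) (hs₁ : M₁.Indep {s}) (hs₂ : M₂.Indep {s})
    (hthr : IsThreshold M₁ M₂ W k s) :
    ∃ m a b : ℤ,
      IsLeast {w : ℤ | ∃ I : Finset α,
        CommonIndep M₁ M₂ I ∧ I.card = k + 1 ∧ setW W I = w} m ∧
      IsLeast {w : ℤ | ∃ I : Finset α, InclCI M₁ M₂ s I ∧ I.card = k ∧ setW W I = w} a ∧
      IsLeast {w : ℤ | ∃ I : Finset α, ExclCI M₁ M₂ s I ∧ I.card = k + 1 ∧ setW W I = w} b ∧
      m = b ∧ m - W s = a ∧ W s = b - a := by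
  obtain ⟨I, I', ⟨hI, hIc, hIm⟩, ⟨hI', hIc', hIm'⟩, hsI, hsI'⟩ := hthr
  have hW : setW W I = setW W I' :=
    le_antisymm (hIm I' hI' hIc') (hIm' I hI hIc)
  have herase : setW W (I.erase s) + W s = setW W I := by
    unfold setW
    exact Finset.sum_erase_add I W hsI
  refine ⟨setW W I, setW W I - W s, setW W I, ⟨⟨I, hI, hIc, rfl⟩, ?_⟩, ⟨⟨I.erase s, ?_, ?_, ?_⟩, ?_⟩,
    ⟨⟨I', ⟨hsI', hI'.1, hI'.2⟩, hIc', hW.symm⟩, ?_⟩, rfl, rfl, by ring⟩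
  · rintro w ⟨J, hJ, hJc, rfl⟩
    exact hIm J hJ hJc
  · refine ⟨Finset.notMem_erase s I, ?_⟩
    rw [Finset.insert_erase hsI]
    exact hI
  · rw [Finset.card_erase_of_mem hsI, hIc]
    rfl
  · linarith
  · rintro w ⟨J, ⟨hsJ, hJ⟩, hJc, rfl⟩
    have h := hIm (insert s J) hJ (by rw [Finset.card_insert_of_notMem hsJ, hJc])
    have h2 : setW W (insert s J) = W s + setW W J := by
      unfold setW
      exact Finset.sum_insert hsJ
    linarith
  · rintro w ⟨J, ⟨_, hJ⟩, hJc, rfl⟩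
    exact hIm J hJ hJc
end

section
/- Suppose W isolates a size-k common independent set I_k of matroids M₁ and M₂, let s ∈ S, let b = 1 if s ∈ I_k and b = 0 otherwise, and define W′ : S → ℤ by W′(x) = W(x) for x ≠ s and W′(s) = (−1)^b · (1 + Σ_{x ∈ S∖{s}} |W(x)|). Then: (i) I_k is the unique minimum-weight size-k common independent set with respect to W′; and (ii) for all subsets S₁, S₂ ⊆ S such that s ∈ S₁ if and only if s ∈ S₂, one has W′(S₁) ≤ W′(S₂) if and only if W(S₁) ≤ W(S₂). -/
/-- Suppose `W` isolates a size-`k` common independent set `I_k`, `s ∈ S`, `b = 1` if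
`s ∈ I_k` and `b = 0` otherwise, and `W′(x) = W(x)` for `x ≠ s` while
`W′(s) = (−1)^b · (1 + Σ_{x ∈ S∖{s}} |W(x)|)`. Then `I_k` is the unique minimum-weight
size-`k` common independent set with respect to `W′`, and for all `S₁, S₂ ⊆ S` with
`s ∈ S₁ ↔ s ∈ S₂`, we have `W′(S₁) ≤ W′(S₂) ↔ W(S₁) ≤ W(S₂)`. -/
theorem modified_weight_isolates {α : Type*} [Fintype α] [DecidableEq α]
    (M₁ M₂ : Matroid α) (hE₁ : M₁.E = Set.univ) (hE₂ : M₂.E = Set.univ)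
    (W : α → ℤ) (k : ℕ) (Ik : Finset α) (hiso : Isolates M₁ M₂ W k Ik)
    (s : α) (b : ℕ) (hb : b = if s ∈ Ik then 1 else 0)
    (W' : α → ℤ)
    (hW' : ∀ x : α, W' x =
      if x = s then (-1 : ℤ) ^ b * (1 + ∑ y ∈ Finset.univ.erase s, |W y|) else W x) :
    Isolates M₁ M₂ W' k Ik ∧
    ∀ S₁ S₂ : Finset α, (s ∈ S₁ ↔ s ∈ S₂) →
      (setW W' S₁ ≤ setW W' S₂ ↔ setW W S₁ ≤ setW W S₂) := by
  have split : ∀ (V : α → ℤ) (A : Finset α),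
      setW V A = (∑ x ∈ A.erase s, V x) + if s ∈ A then V s else 0 := by
    intro V A
    unfold setW
    by_cases h : s ∈ A
    · rw [if_pos h, Finset.sum_erase_add _ _ h]
    · rw [if_neg h, Finset.erase_eq_of_notMem h, add_zero]
  have same : ∀ A : Finset α, ∑ x ∈ A.erase s, W' x = ∑ x ∈ A.erase s, W x := by
    intro A
    refine Finset.sum_congr rfl fun x hx => ?_
    rw [hW', if_neg (Finset.ne_of_mem_erase hx)]
  have key : ∀ S₁ S₂ : Finset α, (s ∈ S₁ ↔ s ∈ S₂) →
      setW W' S₁ - setW W' S₂ = setW W S₁ - setW W S₂ := by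
    intro S₁ S₂ h
    rw [split W', split W', split W, split W, same, same]
    by_cases h2 : s ∈ S₂
    · rw [if_pos h2, if_pos h2, if_pos (h.2 h2), if_pos (h.2 h2)]; ring
    · have h1 : s ∉ S₁ := fun h' => h2 (h.1 h')
      rw [if_neg h2, if_neg h2, if_neg h1, if_neg h1]
  have bound : ∀ A B : Finset α,
      (∑ x ∈ A.erase s, W x) - ∑ x ∈ B.erase s, W x ≤ ∑ y ∈ Finset.univ.erase s, |W y| := by
    intro A B
    have conv : ∀ A : Finset α, ∑ x ∈ A.erase s, W x
        = ∑ y ∈ Finset.univ.erase s, if y ∈ A then W y else 0 := by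
      intro A
      rw [← Finset.sum_filter]
      refine Finset.sum_congr ?_ fun _ _ => rfl
      ext x
      simp
    rw [conv A, conv B, ← Finset.sum_sub_distrib]
    refine Finset.sum_le_sum fun y _ => ?_
    have h1 := le_abs_self (W y)
    have h2 := neg_abs_le (W y)
    have h3 := abs_nonneg (W y)
    split_ifs <;> linarith
  refine ⟨⟨hiso.1, hiso.2.1, fun J hJ hc hne => ?_⟩, fun S₁ S₂ h => ?_⟩
  · by_cases h : s ∈ Ik ↔ s ∈ J
    · have h1 := key Ik J h
      have h2 := hiso.2.2 J hJ hc hne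
      linarith
    · have hs := hW' s
      rw [if_pos rfl, hb] at hs
      rw [split W', split W', same, same]
      have hbd := bound Ik J
      by_cases hI : s ∈ Ik
      · have hJ' : s ∉ J := fun h' => h (iff_of_true hI h')
        rw [if_pos hI] at hs
        rw [if_pos hI, if_neg hJ']
        linarith
      · have hJ' : s ∈ J := by
          by_contra h'
          exact h (iff_of_false hI h')
        rw [if_neg hI] at hs
        rw [if_neg hI, if_pos hJ']
        linarith
  · have h1 := key S₁ S₂ h
    constructor <;> intro _ <;> linarith
end

section
/- Let G = (V,E) be a finite directed graph without self-loops and let c ∈ V. Let G′ be the bipartite graph with vertex set V × {0,1} and edge set E₁ ∪ E₂, where E₁ = {{(u,0),(v,1)} : (u,v) ∈ E} and E₂ = {{(v,0),(v,1)} : v ∈ V ∖ {c}}. Then for every perfect matching M of G′, the set of arcs {(u,v) ∈ E : {(u,0),(v,1)} ∈ M} is a union of pairwise vertex-disjoint simple directed cycles of G, and c lies on one of these cycles. -/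
/-- The list of arcs of the closed walk whose vertex list is `l`
(consecutive pairs, wrapping around). -/
def cycleArcs {α : Type*} (l : List α) : List (α × α) := l.zip (l.rotate 1)

/-- `l` is (the vertex list of) a simple directed cycle of the directed graph with arc set
`E`. -/
def IsCycleIn {α : Type*} (E : Finset (α × α)) (l : List α) : Prop :=
  l ≠ [] ∧ l.Nodup ∧ ∀ p ∈ cycleArcs l, p ∈ E

theorem toList_rotate_one_aux {α : Type*} [Fintype α] [DecidableEq α] (f : Equiv.Perm α) (x : α) :
    cycleArcs (f.toList x) = (f.toList x).map (fun v => (v, f v)) := by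
  have h : (f.toList x).rotate 1 = (f.toList x).map f := by
    rw [← Equiv.Perm.toList_pow_apply_eq_rotate]
    apply List.ext_getElem
    · simp [Equiv.Perm.length_toList, Equiv.Perm.cycleOf_self_apply]
    · intro n h1 h2
      simp [Equiv.Perm.getElem_toList, ← Equiv.Perm.mul_apply, ← pow_succ, ← pow_succ']
  unfold cycleArcs
  rw [h]
  generalize f.toList x = l
  induction l with
  | nil => rfl
  | cons a l ih => simp [ih]

/-- Let `G = (V,E)` be a finite directed graph without self-loops and `c ∈ V`. Consider the
bipartite graph `G′` on `V × {0,1}` with edges `{(u,0),(v,1)}` for `(u,v) ∈ E` and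
`{(v,0),(v,1)}` for `v ≠ c`; a perfect matching of `G′` is a bijection `f : V → V` with
`{(v,0),(f v,1)}` an edge of `G′` for every `v`. Then for every perfect matching `f`, the
arc set `{(u,v) ∈ E : {(u,0),(v,1)} ∈ M}` is a union of pairwise vertex-disjoint simple
directed cycles of `G`, and `c` lies on one of these cycles. -/
theorem perfect_matching_gives_disjoint_cycles {α : Type*} [Fintype α] [DecidableEq α]
    (E : Finset (α × α)) (hloop : ∀ v : α, (v, v) ∉ E) (c : α)
    (f : α ≃ α) (hf : ∀ v : α, (v, f v) ∈ E ∨ (f v = v ∧ v ≠ c)) :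
    ∃ Cs : List (List α),
      (∀ l ∈ Cs, IsCycleIn E l) ∧
      (Cs.Pairwise fun l₁ l₂ => ∀ v : α, v ∈ l₁ → v ∉ l₂) ∧
      (E.filter fun p => f p.1 = p.2) = (Cs.flatMap cycleArcs).toFinset ∧
      ∃ l ∈ Cs, c ∈ l := by
  classical
  have hE : ∀ v, f v ≠ v → (v, f v) ∈ E := fun v hv => (hf v).resolve_right (fun h => hv h.1)
  let g : Equiv.Perm α := f
  let r : α → α := fun v => (Quotient.mk (Equiv.Perm.SameCycle.setoid g) v).out
  have hr : ∀ v, g.SameCycle (r v) v := fun v =>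
    Quotient.mk_out (s := Equiv.Perm.SameCycle.setoid g) v
  have hr2 : ∀ u v, g.SameCycle u v → r u = r v := fun u v h =>
    congrArg Quotient.out (Quotient.sound (s := Equiv.Perm.SameCycle.setoid g) h)
  let R : Finset α := Finset.univ.filter (fun x => g x ≠ x ∧ r x = x)
  have hmem : ∀ x v, v ∈ g.toList x ↔ g.SameCycle x v ∧ g x ≠ x := by
    intro x v
    rw [Equiv.Perm.mem_toList_iff, Equiv.Perm.mem_support]
  have hcov : ∀ v, g v ≠ v → ∃ x ∈ R, v ∈ g.toList x := by
    intro v hv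
    have hx : g (r v) ≠ r v := fun h => hv ((hr v).apply_eq_self_iff.1 h)
    exact ⟨r v, by simpa [R] using ⟨hx, hr2 _ _ (hr v)⟩, (hmem _ _).2 ⟨hr v, hx⟩⟩
  have hmv : ∀ x v, v ∈ g.toList x → g v ≠ v := by
    intro x v hv h
    rw [hmem] at hv
    exact hv.2 (hv.1.apply_eq_self_iff.2 h)
  refine ⟨R.toList.map g.toList, ?_, ?_, ?_, ?_⟩
  · intro l hl
    obtain ⟨x, hx, rfl⟩ := List.mem_map.1 hl
    have hx' : g x ≠ x := by
      have := Finset.mem_toList.1 hx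
      simp only [R, Finset.mem_filter] at this
      exact this.2.1
    refine ⟨List.ne_nil_of_mem ((hmem x x).2 ⟨Equiv.Perm.SameCycle.refl _ _, hx'⟩),
      Equiv.Perm.nodup_toList _ _, ?_⟩
    intro p hp
    rw [toList_rotate_one_aux] at hp
    obtain ⟨v, hv, rfl⟩ := List.mem_map.1 hp
    exact hE v (hmv x v hv)
  · rw [List.pairwise_map]
    refine List.Pairwise.imp_of_mem ?_ R.nodup_toList
    intro x y hx hy hxy v hvx hvy
    rw [hmem] at hvx hvy
    simp only [R, Finset.mem_toList, Finset.mem_filter] at hx hy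
    exact hxy (hx.2.2.symm.trans ((hr2 _ _ (hvx.1.trans hvy.1.symm)).trans hy.2.2))
  · ext ⟨u, v⟩
    simp only [Finset.mem_filter, List.mem_toFinset, List.mem_flatMap, List.mem_map,
      Finset.mem_toList]
    constructor
    · rintro ⟨h, rfl⟩
      have hu : g u ≠ u := fun hu => hloop u (by
        have h' : (u, g u) ∈ E := h
        rwa [hu] at h')
      obtain ⟨x, hx, hux⟩ := hcov u hu
      refine ⟨_, ⟨x, hx, rfl⟩, ?_⟩
      rw [toList_rotate_one_aux]
      exact List.mem_map.2 ⟨u, hux, rfl⟩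
    · rintro ⟨_, ⟨x, hx, rfl⟩, h⟩
      rw [toList_rotate_one_aux] at h
      obtain ⟨w, hw, h⟩ := List.mem_map.1 h
      obtain ⟨rfl, rfl⟩ := Prod.mk.inj h
      exact ⟨hE w (hmv x w hw), rfl⟩
  · have hc : g c ≠ c := by
      intro h
      rcases hf c with h1 | h1
      · have h' : (c, g c) ∈ E := h1
        rw [h] at h'
        exact hloop c h'
      · exact h1.2 rfl
    obtain ⟨x, hx, hcx⟩ := hcov c hc
    exact ⟨_, List.mem_map.2 ⟨x, Finset.mem_toList.2 hx, rfl⟩, hcx⟩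
end

section
/- Let G = (V,E) be a finite directed graph without self-loops, with edge weights Wt : E → ℤ such that every directed cycle of G has nonnegative weight, let c ∈ V, let n = |V|, and suppose G contains a directed cycle through c. Let G′ be the bipartite graph with vertex set V × {0,1} and edge set E₁ ∪ E₂, where E₁ = {{(u,0),(v,1)} : (u,v) ∈ E} and E₂ = {{(v,0),(v,1)} : v ∈ V ∖ {c}}, with edge weights w′({(u,0),(v,1)}) = Wt((u,v))·(n+1) + 1 for (u,v) ∈ E and w′(e) = 0 for e ∈ E₂. Then G′ has a perfect matching, and for every minimum-weight perfect matching M of G′, the set of arcs {(u,v) ∈ E : {(u,0),(v,1)} ∈ M} is a single simple directed cycle through c which has minimum weight among all directed cycles of G through c, and which has the minimum number of edges among the directed cycles through c of minimum weight. -/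
/-- The weight of a perfect matching `f` of the bipartite graph `G′`: the edge
`{(u,0),(v,1)}` with `(u,v) ∈ E` has weight `Wt(u,v)·(n+1) + 1`, and the edges
`{(v,0),(v,1)}` have weight `0`. -/
def matchingWeight {α : Type*} [Fintype α] [DecidableEq α]
    (E : Finset (α × α)) (Wt : α × α → ℤ) (f : α ≃ α) : ℤ :=
  ∑ v : α, if (v, f v) ∈ E then Wt (v, f v) * ((Fintype.card α : ℤ) + 1) + 1 else 0

/-- total weight of moved arcs -/
def permWt {α : Type*} [Fintype α] [DecidableEq α] (Wt : α × α → ℤ) (h : Equiv.Perm α) : ℤ :=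
  ∑ v : α, if h v = v then 0 else Wt (v, h v)

theorem cycleArcs_eq_map {α : Type*} [DecidableEq α] (l : List α) (hn : l.Nodup) :
    cycleArcs l = l.map (fun v => (v, l.formPerm v)) := by
  unfold cycleArcs
  apply List.ext_getElem
  · simp
  · intro i h1 h2
    have hi : i < l.length := by simpa using h2
    simp [List.getElem_rotate, List.formPerm_apply_getElem l hn i hi]

theorem two_le_of_cycle {α : Type*} [DecidableEq α] (E : Finset (α × α))
    (hloop : ∀ v : α, (v, v) ∉ E) (l : List α) (h : IsCycleIn E l) : 2 ≤ l.length := by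
  obtain ⟨h0, hn, hE⟩ := h
  match l, h0 with
  | [a], _ => exact absurd (hE (a, a) (by simp [cycleArcs])) (hloop a)
  | a :: b :: t, _ => simp

theorem formPerm_ne {α : Type*} [DecidableEq α] (l : List α) (hn : l.Nodup)
    (h2 : 2 ≤ l.length) (v : α) : l.formPerm v ≠ v ↔ v ∈ l := by
  exact ⟨fun h => List.mem_of_formPerm_apply_ne h,
    fun h => (List.formPerm_apply_mem_ne_self_iff l hn v h).2 h2⟩

theorem permWt_formPerm {α : Type*} [Fintype α] [DecidableEq α] (Wt : α × α → ℤ)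
    (l : List α) (hn : l.Nodup) (h2 : 2 ≤ l.length) :
    permWt Wt l.formPerm = ((cycleArcs l).map Wt).sum := by
  rw [cycleArcs_eq_map l hn, List.map_map, ← List.sum_toFinset _ hn]
  unfold permWt
  rw [← Finset.sum_subset (Finset.subset_univ l.toFinset)]
  · refine Finset.sum_congr rfl fun v hv => ?_
    rw [if_neg ((formPerm_ne l hn h2 v).2 (by simpa using hv))]
    rfl
  · intro v _ hv
    rw [if_pos]
    by_contra h
    exact hv (by simpa using (formPerm_ne l hn h2 v).1 h)

theorem formPerm_arc {α : Type*} [DecidableEq α] (E : Finset (α × α))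
    (hloop : ∀ v : α, (v, v) ∉ E) (l : List α) (h : IsCycleIn E l) (v : α) :
    ((v, l.formPerm v) ∈ E ∧ v ∈ l) ∨ (l.formPerm v = v ∧ v ∉ l) := by
  by_cases hv : v ∈ l
  · left
    refine ⟨h.2.2 _ ?_, hv⟩
    rw [cycleArcs_eq_map l h.2.1]
    exact List.mem_map.2 ⟨v, hv, rfl⟩
  · exact Or.inr ⟨List.formPerm_apply_of_notMem hv, hv⟩

theorem support_card_formPerm {α : Type*} [Fintype α] [DecidableEq α]
    (l : List α) (hn : l.Nodup) (h2 : 2 ≤ l.length) : l.formPerm.support.card = l.length := by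
  rw [← List.toFinset_card_of_nodup hn]
  congr 1
  ext v
  rw [Equiv.Perm.mem_support, formPerm_ne l hn h2, List.mem_toFinset]

theorem exists_list {α : Type*} [Fintype α] [DecidableEq α] (E : Finset (α × α))
    (σ : Equiv.Perm α) (x : α) (hx : σ x ≠ x) (hσ : ∀ v, (v, σ v) ∈ E ∨ σ v = v) :
    ∃ l : List α, IsCycleIn E l ∧ x ∈ l ∧ l.formPerm = σ.cycleOf x ∧ 2 ≤ l.length := by
  have h2 : 2 ≤ (σ.toList x).length :=
    Equiv.Perm.two_le_length_toList_iff_mem_support.2 (Equiv.Perm.mem_support.2 hx)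
  have hn := Equiv.Perm.nodup_toList σ x
  refine ⟨σ.toList x, ⟨?_, hn, ?_⟩, ?_, Equiv.Perm.formPerm_toList σ x, h2⟩
  · intro h; rw [h] at h2; simp at h2
  · intro p hp
    rw [cycleArcs_eq_map _ hn] at hp
    obtain ⟨v, hv, rfl⟩ := List.mem_map.1 hp
    have h3 := (formPerm_ne _ hn h2 v).2 hv
    rw [Equiv.Perm.formPerm_toList] at h3 ⊢
    have hs : σ.SameCycle x v := (Equiv.Perm.mem_toList_iff.1 hv).1
    rw [hs.cycleOf_apply] at h3 ⊢
    exact (hσ v).resolve_right h3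
  · rw [Equiv.Perm.mem_toList_iff]
    exact ⟨Equiv.Perm.SameCycle.refl _ _, Equiv.Perm.mem_support.2 hx⟩

theorem disjoint_cases {α : Type*} {σ τ : Equiv.Perm α} (h : σ.Disjoint τ) (v : α) :
    ((σ * τ) v = σ v ∧ τ v = v) ∨ ((σ * τ) v = τ v ∧ σ v = v) := by
  rcases h v with h1 | h1
  · right
    exact ⟨by rw [h.commute.eq, Equiv.Perm.mul_apply, h1], h1⟩
  · left
    exact ⟨by rw [Equiv.Perm.mul_apply, h1], h1⟩

theorem permWt_mul {α : Type*} [Fintype α] [DecidableEq α] (Wt : α × α → ℤ)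
    {σ τ : Equiv.Perm α} (h : σ.Disjoint τ) :
    permWt Wt (σ * τ) = permWt Wt σ + permWt Wt τ := by
  unfold permWt
  rw [← Finset.sum_add_distrib]
  refine Finset.sum_congr rfl fun v _ => ?_
  rcases disjoint_cases h v with ⟨h1, h2⟩ | ⟨h1, h2⟩ <;> rw [h1] <;> simp [h2]

theorem valid_parts {α : Type*} {E : Finset (α × α)} {σ τ : Equiv.Perm α}
    (h : σ.Disjoint τ) (hv : ∀ v, (v, (σ * τ) v) ∈ E ∨ (σ * τ) v = v) :
    (∀ v, (v, σ v) ∈ E ∨ σ v = v) ∧ (∀ v, (v, τ v) ∈ E ∨ τ v = v) := by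
  constructor <;> intro v <;> have := hv v <;>
  rcases disjoint_cases h v with ⟨h1, h2⟩ | ⟨h1, h2⟩ <;> rw [h1] at this <;> tauto

theorem permWt_nonneg {α : Type*} [Fintype α] [DecidableEq α] (E : Finset (α × α))
    (Wt : α × α → ℤ)
    (hcyc : ∀ l : List α, IsCycleIn E l → 0 ≤ ((cycleArcs l).map Wt).sum)
    (σ : Equiv.Perm α) : (∀ v, (v, σ v) ∈ E ∨ σ v = v) → 0 ≤ permWt Wt σ := by
  induction σ using Equiv.Perm.cycle_induction_on with
  | base_one => intro _; simp [permWt]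
  | base_cycles σ hσ =>
    intro hv
    obtain ⟨x, hx, -⟩ := id hσ
    obtain ⟨l, hl, -, hf, h2⟩ := exists_list E σ x hx hv
    rw [hσ.cycleOf_eq hx] at hf
    rw [← hf, permWt_formPerm Wt l hl.2.1 h2]
    exact hcyc l hl
  | induction_disjoint σ τ hd _ h1 h2 =>
    intro hv
    obtain ⟨ha, hb⟩ := valid_parts hd hv
    rw [permWt_mul Wt hd]
    exact add_nonneg (h1 ha) (h2 hb)

theorem matchingWeight_eq {α : Type*} [Fintype α] [DecidableEq α] (E : Finset (α × α))
    (hloop : ∀ v : α, (v, v) ∉ E) (Wt : α × α → ℤ) (σ : Equiv.Perm α)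
    (hv : ∀ v, (v, σ v) ∈ E ∨ σ v = v) :
    matchingWeight E Wt σ
      = permWt Wt σ * ((Fintype.card α : ℤ) + 1) + σ.support.card := by
  unfold matchingWeight permWt
  have hs : (σ.support.card : ℤ) = ∑ v : α, if σ v = v then 0 else 1 := by
    rw [Equiv.Perm.support, Finset.card_filter]
    push_cast
    refine Finset.sum_congr rfl fun v _ => ?_
    by_cases h : σ v = v <;> simp [h]
  rw [hs, Finset.sum_mul, ← Finset.sum_add_distrib]
  refine Finset.sum_congr rfl fun v _ => ?_
  by_cases h : σ v = v
  · simp [h, hloop]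
  · simp [h, (hv v).resolve_right h]

/-- Let `G = (V,E)` be a finite loopless directed graph with edge weights `Wt` whose
directed cycles all have nonnegative weight, let `c ∈ V`, `n = |V|`, and suppose `G` has a
directed cycle through `c`. Consider the bipartite graph `G′` on `V × {0,1}` with edges
`{(u,0),(v,1)}` of weight `Wt(u,v)·(n+1)+1` for `(u,v) ∈ E` and edges `{(v,0),(v,1)}` of
weight `0` for `v ≠ c`; a perfect matching of `G′` is a bijection `f : V → V` with
`{(v,0),(f v,1)}` an edge of `G′` for every `v`. Then `G′` has a perfect matching, and for
every minimum-weight perfect matching `f` of `G′`, the arc set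
`{(u,v) ∈ E : {(u,0),(v,1)} ∈ M}` is a single simple directed cycle through `c`, of
minimum weight among the directed cycles of `G` through `c`, with the minimum number of
edges among the minimum-weight directed cycles through `c`. -/
theorem min_matching_gives_min_cycle {α : Type*} [Fintype α] [DecidableEq α]
    (E : Finset (α × α)) (hloop : ∀ v : α, (v, v) ∉ E)
    (Wt : α × α → ℤ) (c : α)
    (hcyc : ∀ l : List α, IsCycleIn E l → 0 ≤ ((cycleArcs l).map Wt).sum)
    (hex : ∃ l : List α, IsCycleIn E l ∧ c ∈ l) :
    (∃ f : α ≃ α, ∀ v : α, (v, f v) ∈ E ∨ (f v = v ∧ v ≠ c)) ∧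
    ∀ f : α ≃ α, (∀ v : α, (v, f v) ∈ E ∨ (f v = v ∧ v ≠ c)) →
      (∀ g : α ≃ α, (∀ v : α, (v, g v) ∈ E ∨ (g v = v ∧ v ≠ c)) →
        matchingWeight E Wt f ≤ matchingWeight E Wt g) →
      ∃ l : List α, IsCycleIn E l ∧ c ∈ l ∧
        (E.filter fun p => f p.1 = p.2) = (cycleArcs l).toFinset ∧
        (∀ l' : List α, IsCycleIn E l' → c ∈ l' →
          ((cycleArcs l).map Wt).sum ≤ ((cycleArcs l').map Wt).sum) ∧
        (∀ l' : List α, IsCycleIn E l' → c ∈ l' →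
          ((cycleArcs l').map Wt).sum = ((cycleArcs l).map Wt).sum →
          l.length ≤ l'.length) := by
  have hfp : ∀ l : List α, IsCycleIn E l → c ∈ l →
      ∀ v : α, (v, l.formPerm v) ∈ E ∨ (l.formPerm v = v ∧ v ≠ c) := by
    intro l hl hc v
    rcases formPerm_arc E hloop l hl v with h | h
    · exact Or.inl h.1
    · exact Or.inr ⟨h.1, fun e => h.2 (e ▸ hc)⟩
  have hmw : ∀ l : List α, IsCycleIn E l → c ∈ l → matchingWeight E Wt l.formPerm
      = ((cycleArcs l).map Wt).sum * ((Fintype.card α : ℤ) + 1) + l.length := by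
    intro l hl hc
    have h2 := two_le_of_cycle E hloop l hl
    rw [matchingWeight_eq E hloop Wt _ (fun v => (hfp l hl hc v).imp_right And.left),
      permWt_formPerm Wt l hl.2.1 h2, support_card_formPerm l hl.2.1 h2]
  constructor
  · obtain ⟨l, hl, hc⟩ := hex
    exact ⟨l.formPerm, hfp l hl hc⟩
  intro f hf hmin
  have hf' : ∀ v, (v, f v) ∈ E ∨ f v = v := fun v => (hf v).imp_right And.left
  have hcE : (c, f c) ∈ E := (hf c).resolve_right fun h => h.2 rfl
  have hfc : f c ≠ c := fun h => hloop c (by rwa [h] at hcE)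
  obtain ⟨l, hl, hc, hform, h2⟩ := exists_list E f c hfc hf'
  have hn := hl.2.1
  have hdis : Equiv.Perm.Disjoint (f * (Equiv.Perm.cycleOf f c)⁻¹) (Equiv.Perm.cycleOf f c) :=
    Equiv.Perm.disjoint_mul_inv_of_mem_cycleFactorsFinset
      (Equiv.Perm.cycleOf_mem_cycleFactorsFinset_iff.2 (Equiv.Perm.mem_support.2 hfc))
  rw [← hform] at hdis
  obtain ⟨h, hh⟩ : ∃ h : Equiv.Perm α, h = f * (l.formPerm)⁻¹ := ⟨_, rfl⟩
  rw [← hh] at hdis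
  have hprod : f = h * l.formPerm := by rw [hh]; group
  have hpart := valid_parts (E := E) hdis (by rw [← hprod]; exact hf')
  have hnn := permWt_nonneg E Wt hcyc h hpart.1
  have hle := hmin l.formPerm (hfp l hl hc)
  have hcard := hdis.card_support_mul
  have hpm := permWt_mul Wt hdis
  rw [← hprod] at hcard hpm
  rw [matchingWeight_eq E hloop Wt f hf', matchingWeight_eq E hloop Wt _ hpart.2,
    hcard, hpm] at hle
  have hnn' : 0 ≤ permWt Wt h * ((Fintype.card α : ℤ) + 1) := by positivity
  have h0 : h.support.card = 0 := by
    push_cast at hle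
    zify
    nlinarith [Int.natCast_nonneg h.support.card]
  have h1 : h = 1 := by
    rwa [Finset.card_eq_zero, Equiv.Perm.support_eq_empty_iff] at h0
  have hfl : f = l.formPerm := by rw [hprod, h1, one_mul]
  have hkey : ∀ l' : List α, IsCycleIn E l' → c ∈ l' →
      ((cycleArcs l).map Wt).sum * ((Fintype.card α : ℤ) + 1) + l.length ≤
      ((cycleArcs l').map Wt).sum * ((Fintype.card α : ℤ) + 1) + l'.length := by
    intro l' hl' hc'
    rw [← hmw l hl hc, ← hmw l' hl' hc', ← hfl]
    exact hmin _ (hfp l' hl' hc')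
  refine ⟨l, hl, hc, ?_, ?_, ?_⟩
  · ext ⟨u, v⟩
    rw [Finset.mem_filter, List.mem_toFinset, cycleArcs_eq_map l hn, List.mem_map, hfl]
    constructor
    · rintro ⟨hE, huv⟩
      dsimp only at huv
      refine ⟨u, ?_, by rw [huv]⟩
      rw [← formPerm_ne l hn h2, huv]
      rintro rfl
      exact hloop _ hE
    · rintro ⟨w, hw, he⟩
      obtain ⟨rfl, rfl⟩ := Prod.mk.inj he
      refine ⟨?_, rfl⟩
      rcases formPerm_arc E hloop l hl w with h | h
      · exact h.1
      · exact absurd hw h.2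
  · intro l' hl' hc'
    have := hkey l' hl' hc'
    have hlen : l'.length ≤ Fintype.card α := hl'.2.1.length_le_card
    by_contra! hlt
    zify at hlen
    have h3 : (0:ℤ) < l.length := by omega
    nlinarith
  · intro l' hl' hc' he
    have := hkey l' hl' hc'
    rw [he] at this
    omega
end

section
/- Let 𝔽 be a field, let m, n ∈ ℕ, let k ≤ m, and let L₁ and L₂ be m × n matrices over 𝔽 with columns indexed by a set S of size n. For 1 ≤ i ≤ m and 1 ≤ j ≤ m−k, write s_{ij} = (i−1)(m−k)+j. Let C be the m × m(m−k) matrix whose s_{ij}-th column is the i-th standard basis vector of 𝔽^m, and let D be the (m−k) × m(m−k) matrix whose s_{ij}-th column is the j-th standard basis vector of 𝔽^{m−k}. Define the (2m−k) × (n + 2m(m−k)) block matrices L₁′ = [[L₁, C, 0],[0, 0, D]] and L₂′ = [[L₂, 0, C],[0, D, 0]], with columns indexed by S ∪ A ∪ B, where A indexes the middle block of m(m−k) columns and B the last block. Let W : S → ℤ and suppose there is a unique minimum-weight set I_k among the size-k subsets of S that are doubly independent for (L₁,L₂). Define W′ : S ∪ A ∪ B → ℤ by W′(e) = 10m⁴·W(e)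 for e ∈ S, and W′(e) = i·j for the element of A or B corresponding to column s_{ij}. Then there is a unique minimum-W′-weight set I among the subsets of S ∪ A ∪ B of cardinality 2m − k that are doubly independent for (L₁′,L₂′), and it satisfies I ∩ S = I_k. -/
/-- A set `I` of column indices is doubly independent for the pair of matrices `(A, B)` if
the corresponding columns of `A` are linearly independent and the corresponding columns of
`B` are linearly independent. -/
def DoublyIndep (𝔽 : Type*) [Field 𝔽] {ρ ι : Type*} (A B : Matrix ρ ι 𝔽)
    (I : Finset ι) : Prop :=
  LinearIndependent 𝔽 (fun i : I => A.transpose i.1) ∧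
  LinearIndependent 𝔽 (fun i : I => B.transpose i.1)

/-- The weight of a set of indices under a weight function. -/
def wsum {ι : Type*} (W : ι → ℤ) (I : Finset ι) : ℤ := ∑ x ∈ I, W x

/-- The `m × m(m−k)` matrix `C` whose `s_{ij}`-th column (`s_{ij} = (i−1)(m−k)+j`,
`0`-indexed: column `a` with `i = a / (m−k)`) is the `i`-th standard basis vector of
`𝔽^m`. -/
def Cmat (𝔽 : Type*) [Field 𝔽] (m k : ℕ) : Matrix (Fin m) (Fin (m * (m - k))) 𝔽 :=
  Matrix.of fun p q => if (p : ℕ) = (q : ℕ) / (m - k) then 1 else 0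

/-- The `(m−k) × m(m−k)` matrix `D` whose `s_{ij}`-th column (`0`-indexed: column `a` with
`j = a % (m−k)`) is the `j`-th standard basis vector of `𝔽^{m−k}`. -/
def Dmat (𝔽 : Type*) [Field 𝔽] (m k : ℕ) : Matrix (Fin (m - k)) (Fin (m * (m - k))) 𝔽 :=
  Matrix.of fun r q => if (r : ℕ) = (q : ℕ) % (m - k) then 1 else 0

/-- The block matrix `L₁′ = [[L₁, C, 0],[0, 0, D]]`, with columns indexed by `S ⊕ (A ⊕ B)`. -/
def L1aug (𝔽 : Type*) [Field 𝔽] (m n k : ℕ) (L : Matrix (Fin m) (Fin n) 𝔽) :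
    Matrix (Fin m ⊕ Fin (m - k)) (Fin n ⊕ (Fin (m * (m - k)) ⊕ Fin (m * (m - k)))) 𝔽 :=
  Matrix.of fun p q =>
    match p, q with
    | Sum.inl p, Sum.inl s => L p s
    | Sum.inl p, Sum.inr (Sum.inl a) => Cmat 𝔽 m k p a
    | Sum.inl _, Sum.inr (Sum.inr _) => 0
    | Sum.inr _, Sum.inl _ => 0
    | Sum.inr _, Sum.inr (Sum.inl _) => 0
    | Sum.inr r, Sum.inr (Sum.inr b) => Dmat 𝔽 m k r b

/-- The block matrix `L₂′ = [[L₂, 0, C],[0, D, 0]]`, with columns indexed by `S ⊕ (A ⊕ B)`. -/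
def L2aug (𝔽 : Type*) [Field 𝔽] (m n k : ℕ) (L : Matrix (Fin m) (Fin n) 𝔽) :
    Matrix (Fin m ⊕ Fin (m - k)) (Fin n ⊕ (Fin (m * (m - k)) ⊕ Fin (m * (m - k)))) 𝔽 :=
  Matrix.of fun p q =>
    match p, q with
    | Sum.inl p, Sum.inl s => L p s
    | Sum.inl _, Sum.inr (Sum.inl _) => 0
    | Sum.inl p, Sum.inr (Sum.inr b) => Cmat 𝔽 m k p b
    | Sum.inr _, Sum.inl _ => 0
    | Sum.inr r, Sum.inr (Sum.inl a) => Dmat 𝔽 m k r a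
    | Sum.inr _, Sum.inr (Sum.inr _) => 0


/-- The weight function `W′` on `S ⊕ (A ⊕ B)`: `W′(e) = 10m⁴·W(e)` for `e ∈ S`, and
`W′(e) = i·j` for the element of `A` or `B` corresponding to column `s_{ij}`
(`0`-indexed column `a`: `i = a/(m−k) + 1`, `j = a%(m−k) + 1`). -/
def Waug (m n k : ℕ) (W : Fin n → ℤ) :
    Fin n ⊕ (Fin (m * (m - k)) ⊕ Fin (m * (m - k))) → ℤ
  | Sum.inl e => 10 * (m : ℤ) ^ 4 * W e
  | Sum.inr (Sum.inl a) => (((a : ℕ) / (m - k) + 1) * ((a : ℕ) % (m - k) + 1) : ℕ)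
  | Sum.inr (Sum.inr b) => (((b : ℕ) / (m - k) + 1) * ((b : ℕ) % (m - k) + 1) : ℕ)

lemma card_le_of_span {𝔽 V ι κ : Type*} [Field 𝔽] [AddCommGroup V] [Module 𝔽 V]
    (v : ι → V) (w : κ → V) (s : Finset ι) (t : Finset κ)
    (hv : LinearIndepOn 𝔽 v (s : Set ι))
    (h : ∀ i ∈ s, v i ∈ Submodule.span 𝔽 (w '' (t : Set κ))) : s.card ≤ t.card := by
  classical
  have h1 := finrank_span_eq_card (R := 𝔽) (b := fun i : (s : Set ι) => v i) hv
  have h2 : Submodule.span 𝔽 (Set.range (fun i : (s : Set ι) => v i)) ≤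
      Submodule.span 𝔽 (w '' (t : Set κ)) := by
    rw [Submodule.span_le]
    rintro _ ⟨i, rfl⟩
    exact h i.1 i.2
  have h3 : Module.finrank 𝔽 (Submodule.span 𝔽 (w '' (t : Set κ))) ≤ t.card := by
    have := finrank_span_finset_le_card (R := 𝔽) (t.image w)
    rw [Finset.coe_image] at this
    exact this.trans Finset.card_image_le
  have : FiniteDimensional 𝔽 (Submodule.span 𝔽 (w '' (t : Set κ))) :=
    FiniteDimensional.span_of_finite 𝔽 ((t.finite_toSet).image w)
  have h4 := Submodule.finrank_mono h2
  rw [h1] at h4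
  simp at h4
  omega

lemma greedy {𝔽 : Type*} [Field 𝔽] {m n : ℕ} (u : Fin n → Fin m → 𝔽) (K : Finset (Fin n))
    (hK : LinearIndepOn 𝔽 u (K : Set (Fin n))) (p : ℕ) (hp : p ≤ m) :
    ∃ T : Finset (Fin m), (∀ i ∈ T, (i : ℕ) < p) ∧
      LinearIndepOn 𝔽 (Sum.elim u (fun i : Fin m => (Pi.single i 1 : Fin m → 𝔽)))
        (K.disjSum T : Finset (Fin n ⊕ Fin m)) ∧
      ∀ q ≤ p, ∀ i : Fin m, (i : ℕ) < q → (Pi.single i 1 : Fin m → 𝔽) ∈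
        Submodule.span 𝔽 ((Sum.elim u (fun i : Fin m => (Pi.single i 1 : Fin m → 𝔽))) ''
          (K.disjSum (T.filter (fun i : Fin m => (i : ℕ) < q)) : Finset (Fin n ⊕ Fin m))) := by
  classical
  induction p with
  | zero =>
    refine ⟨∅, by simp, ?_, by intro q hq i hi; omega⟩
    have h1 : ((K.disjSum ∅ : Finset (Fin n ⊕ Fin m)) : Set (Fin n ⊕ Fin m))
        = Sum.inl '' (K : Set (Fin n)) := by
      ext x; simp [Finset.mem_disjSum]
    rw [h1]
    apply LinearIndepOn.image_of_comp
    exact hK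
  | succ p ih =>
    obtain ⟨T, hT, hind, hsp⟩ := ih (by omega)
    set v := Sum.elim u (fun i : Fin m => (Pi.single i 1 : Fin m → 𝔽)) with hv
    let e : Fin m := ⟨p, by omega⟩
    have hTp : ∀ q, p ≤ q → T.filter (fun i : Fin m => (i : ℕ) < q) = T := by
      intro q hq
      apply Finset.filter_true_of_mem
      intro i hi
      have := hT i hi
      omega
    by_cases he : (Pi.single e 1 : Fin m → 𝔽) ∈ Submodule.span 𝔽
        (v '' (K.disjSum T : Finset (Fin n ⊕ Fin m)))
    · refine ⟨T, fun i hi => by have := hT i hi; omega, hind, ?_⟩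
      intro q hq i hi
      by_cases hqp : q ≤ p
      · exact hsp q hqp i hi
      · have hq' : q = p + 1 := by omega
        subst hq'
        rw [hTp _ (by omega)]
        by_cases hip : (i : ℕ) < p
        · have := hsp p le_rfl i hip
          rwa [hTp _ le_rfl] at this
        · have : i = e := Fin.ext (by simp [e]; omega)
          rw [this]; exact he
    · have heT : e ∉ T := fun h => by have := hT e h; simp [e] at this
      refine ⟨insert e T, ?_, ?_, ?_⟩
      · intro i hi
        rcases Finset.mem_insert.1 hi with rfl | h
        · simp [e]
        · have := hT i h; omega
      · have h1 : ((K.disjSum (insert e T) : Finset (Fin n ⊕ Fin m)) : Set (Fin n ⊕ Fin m))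
            = insert (Sum.inr e) ((K.disjSum T : Finset (Fin n ⊕ Fin m)) : Set (Fin n ⊕ Fin m)) := by
          ext x
          rcases x with x | x <;> simp
        rw [h1, linearIndepOn_insert (by simpa using heT)]
        exact ⟨hind, he⟩
      · intro q hq i hi
        by_cases hqp : q ≤ p
        · have h2 : (insert e T).filter (fun i : Fin m => (i : ℕ) < q) = T.filter (fun i : Fin m => (i : ℕ) < q) := by
            rw [Finset.filter_insert, if_neg]
            simp [e]; omega
          rw [h2]
          exact hsp q hqp i hi
        · have hq' : q = p + 1 := by omega
          subst hq'
          have h2 : (insert e T).filter (fun i : Fin m => (i : ℕ) < p + 1) = insert e T := by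
            rw [Finset.filter_insert, if_pos (by simp [e]), hTp _ (by omega)]
          rw [h2]
          by_cases hip : (i : ℕ) < p
          · have := hsp p le_rfl i hip
            rw [hTp _ le_rfl] at this
            refine Submodule.span_mono (Set.image_mono ?_) this
            intro x hx
            rcases x with x | x
            · simpa using hx
            · simp at hx ⊢; exact Or.inr hx
          · have : i = e := Fin.ext (by simp [e]; omega)
            rw [this]
            apply Submodule.subset_span
            exact ⟨Sum.inr e, by simp, by simp [hv]⟩

lemma sum_weight {m d : ℕ} (M : Finset (Fin (m * d))) :
    ∑ a ∈ M, ((a : ℕ) / d + 1) * ((a : ℕ) % d + 1) =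
      ∑ x ∈ Finset.range m ×ˢ Finset.range d,
        (M.filter (fun a : Fin (m * d) => x.1 ≤ (a : ℕ) / d ∧ x.2 ≤ (a : ℕ) % d)).card := by
  simp_rw [Finset.card_filter]
  rw [Finset.sum_comm]
  refine Finset.sum_congr rfl fun a _ => ?_
  have h1 : (a : ℕ) / d < m := a.divNat.is_lt
  have h2 : (a : ℕ) % d < d := a.modNat.is_lt
  rw [← Finset.card_filter]
  have : (Finset.range m ×ˢ Finset.range d).filter
      (fun x : ℕ × ℕ => x.1 ≤ (a : ℕ) / d ∧ x.2 ≤ (a : ℕ) % d) =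
      Finset.range ((a : ℕ) / d + 1) ×ˢ Finset.range ((a : ℕ) % d + 1) := by
    ext ⟨x, y⟩
    simp only [Finset.mem_filter, Finset.mem_product, Finset.mem_range]
    omega
  rw [this]; simp

lemma second_diff {m d : ℕ} (M : Finset (Fin (m * d))) (p q : ℕ) :
    (M.filter (fun a : Fin (m * d) => p ≤ (a : ℕ) / d ∧ q ≤ (a : ℕ) % d)).card +
    (M.filter (fun a : Fin (m * d) => p + 1 ≤ (a : ℕ) / d ∧ q + 1 ≤ (a : ℕ) % d)).card =
    (M.filter (fun a : Fin (m * d) => p + 1 ≤ (a : ℕ) / d ∧ q ≤ (a : ℕ) % d)).card +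
    (M.filter (fun a : Fin (m * d) => p ≤ (a : ℕ) / d ∧ q + 1 ≤ (a : ℕ) % d)).card +
    (M.filter (fun a : Fin (m * d) => (a : ℕ) / d = p ∧ (a : ℕ) % d = q)).card := by
  simp_rw [Finset.card_filter, ← Finset.sum_add_distrib]
  refine Finset.sum_congr rfl fun a _ => ?_
  split_ifs <;> omega

lemma eq_of_counts {m d : ℕ} (M N : Finset (Fin (m * d)))
    (h : ∀ p q : ℕ, (M.filter (fun a : Fin (m * d) => p ≤ (a : ℕ) / d ∧ q ≤ (a : ℕ) % d)).card =
      (N.filter (fun a : Fin (m * d) => p ≤ (a : ℕ) / d ∧ q ≤ (a : ℕ) % d)).card) : M = N := by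
  have key : ∀ p q : ℕ, (M.filter (fun a : Fin (m * d) => (a : ℕ) / d = p ∧ (a : ℕ) % d = q)).card =
      (N.filter (fun a : Fin (m * d) => (a : ℕ) / d = p ∧ (a : ℕ) % d = q)).card := by
    intro p q
    have h1 := second_diff M p q
    have h2 := second_diff N p q
    have := h p q
    have := h (p+1) q
    have := h p (q+1)
    have := h (p+1) (q+1)
    omega
  have mem : ∀ (P : Finset (Fin (m * d))) (a : Fin (m * d)), a ∈ P ↔
      0 < (P.filter (fun b : Fin (m * d) => (b : ℕ) / d = (a : ℕ) / d ∧ (b : ℕ) % d = (a : ℕ) % d)).card := by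
    intro P a
    rw [Finset.card_pos]
    constructor
    · intro ha; exact ⟨a, by simp [ha]⟩
    · rintro ⟨b, hb⟩
      simp only [Finset.mem_filter] at hb
      have : b = a := by
        apply Fin.ext
        rw [← Nat.div_add_mod (b : ℕ) d, ← Nat.div_add_mod (a : ℕ) d, hb.2.1, hb.2.2]
      exact this ▸ hb.1
  ext a
  rw [mem M, mem N, key]

lemma matching {m d : ℕ} (T : Finset (Fin m)) (hT : T.card = d) :
    ∃ Ms : Finset (Fin (m * d)), Set.InjOn (fun a : Fin (m * d) => a.modNat) (Ms : Set _) ∧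
      Set.InjOn (fun a : Fin (m * d) => a.divNat) (Ms : Set _) ∧
      (∀ a ∈ Ms, a.divNat ∈ T) ∧ Ms.card = d ∧
      ∀ M : Finset (Fin (m * d)), Set.InjOn (fun a : Fin (m * d) => a.modNat) (M : Set _) →
        M.card = d →
        (∀ p ≤ m, (M.filter (fun a : Fin (m * d) => (a : ℕ) / d < p)).card ≤
          (T.filter (fun i : Fin m => (i : ℕ) < p)).card) →
        M ≠ Ms → ∑ a ∈ Ms, ((a : ℕ) / d + 1) * ((a : ℕ) % d + 1) <
          ∑ a ∈ M, ((a : ℕ) / d + 1) * ((a : ℕ) % d + 1) := by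
  classical
  let em := T.orderEmbOfFin hT
  let φ : Fin d → Fin (m * d) := fun j => finProdFinEquiv (em j.rev, j)
  have hdiv : ∀ j, (φ j).divNat = em j.rev := fun j =>
    congrArg Prod.fst (finProdFinEquiv.symm_apply_apply (em j.rev, j))
  have hmod : ∀ j, (φ j).modNat = j := fun j =>
    congrArg Prod.snd (finProdFinEquiv.symm_apply_apply (em j.rev, j))
  have hdiv' : ∀ j, (φ j : ℕ) / d = em j.rev := fun j => congrArg Fin.val (hdiv j)
  have hmod' : ∀ j, (φ j : ℕ) % d = j := fun j => congrArg Fin.val (hmod j)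
  have hφ : Function.Injective φ := fun i j h => by rw [← hmod i, ← hmod j, h]
  let r : ℕ → ℕ := fun p => (T.filter (fun i : Fin m => (i : ℕ) < p)).card
  have hcount : ∀ p q : ℕ, ((Finset.univ.image φ).filter
      (fun a : Fin (m * d) => p ≤ (a : ℕ) / d ∧ q ≤ (a : ℕ) % d)).card = d - q - r p := by
    intro p q
    have hr : r p = (Finset.univ.filter (fun j : Fin d => (em j : ℕ) < p)).card := by
      have : T.filter (fun i : Fin m => (i : ℕ) < p) =
          (Finset.univ.filter (fun j : Fin d => (em j : ℕ) < p)).image em := by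
        ext i
        simp only [Finset.mem_filter, Finset.mem_image, Finset.mem_univ, true_and]
        constructor
        · rintro ⟨hi, hip⟩
          have : i ∈ Set.range em := by rw [Finset.range_orderEmbOfFin]; exact hi
          obtain ⟨j, rfl⟩ := this
          exact ⟨j, hip, rfl⟩
        · rintro ⟨j, hj, rfl⟩
          exact ⟨Finset.orderEmbOfFin_mem T hT j, hj⟩
      show (T.filter (fun i : Fin m => (i : ℕ) < p)).card = _
      rw [this, Finset.card_image_of_injective _ em.injective]
    have hlt : ∀ j : Fin d, (em j : ℕ) < p ↔ (j : ℕ) < r p := by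
      intro j
      rw [hr]
      constructor
      · intro hj
        have : Finset.Iic j ⊆ Finset.univ.filter (fun j : Fin d => (em j : ℕ) < p) := by
          intro i hi
          simp only [Finset.mem_Iic] at hi
          have : em i ≤ em j := em.monotone hi
          simp only [Finset.mem_filter, Finset.mem_univ, true_and]
          exact lt_of_le_of_lt this hj
        have := Finset.card_le_card this
        rw [Fin.card_Iic] at this
        omega
      · intro hj
        by_contra hcon
        have : Finset.univ.filter (fun j : Fin d => (em j : ℕ) < p) ⊆ Finset.Iio j := by
          intro i hi
          simp only [Finset.mem_filter, Finset.mem_univ, true_and] at hi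
          rw [Finset.mem_Iio]
          by_contra h
          have : em j ≤ em i := em.monotone (not_lt.1 h)
          have : (em j : ℕ) ≤ em i := this
          omega
        have := Finset.card_le_card this
        rw [Fin.card_Iio] at this
        omega
    rw [Finset.filter_image, Finset.card_image_of_injective _ hφ]
    simp_rw [hdiv', hmod']
    rw [← Finset.card_map Fin.revPerm.toEmbedding, ← Finset.card_map Fin.valEmbedding]
    have : ((Finset.univ.filter (fun j : Fin d => p ≤ (em j.rev : ℕ) ∧ q ≤ (j : ℕ))).map
        Fin.revPerm.toEmbedding).map Fin.valEmbedding = Finset.Ico (r p) (d - q) := by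
      ext x
      simp only [Finset.mem_map, Finset.mem_filter, Finset.mem_univ, true_and, Finset.mem_Ico]
      constructor
      · rintro ⟨_, ⟨j, ⟨h1, h2⟩, rfl⟩, rfl⟩
        have := hlt j.rev
        have h3 := Fin.val_rev j
        have := j.2
        simp only [Equiv.toEmbedding_apply, Fin.revPerm_apply, Fin.valEmbedding_apply]
        omega
      · rintro ⟨h1, h2⟩
        let j : Fin d := ⟨x, by omega⟩
        have h3 := hlt j
        have h4 := Fin.val_rev j
        refine ⟨j, ⟨j.rev, ⟨?_, ?_⟩, by simp⟩, rfl⟩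
        · rw [Fin.rev_rev]
          have : (j : ℕ) = x := rfl
          omega
        · have : (j : ℕ) = x := rfl
          omega
    rw [this, Nat.card_Ico]
  refine ⟨Finset.univ.image φ, ?_, ?_, ?_, ?_, ?_⟩
  · intro a ha b hb hab
    simp only [Finset.coe_image, Finset.coe_univ, Set.image_univ, Set.mem_range] at ha hb
    obtain ⟨i, rfl⟩ := ha
    obtain ⟨j, rfl⟩ := hb
    simp only [hmod] at hab
    rw [hab]
  · intro a ha b hb hab
    simp only [Finset.coe_image, Finset.coe_univ, Set.image_univ, Set.mem_range] at ha hb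
    obtain ⟨i, rfl⟩ := ha
    obtain ⟨j, rfl⟩ := hb
    simp only [hdiv] at hab
    rw [Fin.rev_injective (em.injective hab)]
  · intro a ha
    simp only [Finset.mem_image, Finset.mem_univ, true_and] at ha
    obtain ⟨j, rfl⟩ := ha
    rw [hdiv]
    exact Finset.orderEmbOfFin_mem T hT _
  · rw [Finset.card_image_of_injective _ hφ]; simp
  · intro M hM hMd hdom hne
    have hle : ∀ p q : ℕ, ((Finset.univ.image φ).filter
        (fun a : Fin (m * d) => p ≤ (a : ℕ) / d ∧ q ≤ (a : ℕ) % d)).card ≤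
        (M.filter (fun a : Fin (m * d) => p ≤ (a : ℕ) / d ∧ q ≤ (a : ℕ) % d)).card := by
      intro p q
      by_cases hp : p ≤ m
      · rw [hcount]
        have h1 : d - q ≤ (M.filter (fun a : Fin (m * d) => q ≤ (a : ℕ) % d)).card := by
          have himg : M.image (fun a => a.modNat) = Finset.univ := by
            apply Finset.eq_univ_of_card
            rw [Finset.card_image_of_injOn hM, hMd]; simp
          have h2 : Finset.Ico q d ⊆ (M.filter (fun a : Fin (m * d) => q ≤ (a : ℕ) % d)).image
              (fun a : Fin (m * d) => (a : ℕ) % d) := by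
            intro x hx
            rw [Finset.mem_Ico] at hx
            have : (⟨x, hx.2⟩ : Fin d) ∈ M.image (fun a => a.modNat) := by rw [himg]; simp
            obtain ⟨a, ha, hax⟩ := Finset.mem_image.1 this
            have hax' : (a : ℕ) % d = x := congrArg Fin.val hax
            refine Finset.mem_image.2 ⟨a, Finset.mem_filter.2 ⟨ha, ?_⟩, hax'⟩
            omega
          have := (Finset.card_le_card h2).trans Finset.card_image_le
          rwa [Nat.card_Ico] at this
        have h2 : (M.filter (fun a : Fin (m * d) => q ≤ (a : ℕ) % d)).card ≤
            (M.filter (fun a : Fin (m * d) => p ≤ (a : ℕ) / d ∧ q ≤ (a : ℕ) % d)).card +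
            (M.filter (fun a : Fin (m * d) => (a : ℕ) / d < p)).card := by
          refine le_trans (Finset.card_le_card ?_) (Finset.card_union_le _ _)
          intro a ha
          simp only [Finset.mem_filter, Finset.mem_union] at ha ⊢
          by_cases h : p ≤ (a : ℕ) / d
          · exact Or.inl ⟨ha.1, h, ha.2⟩
          · exact Or.inr ⟨ha.1, by omega⟩
        have h3 := hdom p hp
        change _ ≤ r p at h3
        omega
      · rw [Finset.filter_false_of_mem]
        · simp
        · intro a _ h
          have : (a : ℕ) / d < m := a.divNat.is_lt
          omega
    rw [sum_weight, sum_weight]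
    refine lt_of_le_of_ne (Finset.sum_le_sum fun x _ => hle x.1 x.2) ?_
    intro heq
    rw [Finset.sum_eq_sum_iff_of_le (fun x _ => hle x.1 x.2)] at heq
    apply hne
    apply eq_of_counts
    intro p q
    by_cases hpq : p < m ∧ q < d
    · exact (heq (p, q) (by simp [hpq])).symm
    · rw [Finset.filter_false_of_mem, Finset.filter_false_of_mem]
      · intro a _ h
        have h1 : (a : ℕ) / d < m := a.divNat.is_lt
        have h2 : (a : ℕ) % d < d := a.modNat.is_lt
        omega
      · intro a _ h
        have h1 : (a : ℕ) / d < m := a.divNat.is_lt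
        have h2 : (a : ℕ) % d < d := a.modNat.is_lt
        omega

lemma Cmat_col (𝔽 : Type*) [Field 𝔽] (m k : ℕ) (a : Fin (m * (m - k))) :
    (fun p => Cmat 𝔽 m k p a) = Pi.single a.divNat 1 := by
  ext p
  simp only [Cmat, Matrix.of_apply, Pi.single_apply, Fin.ext_iff,
    Fin.coe_divNat]

lemma Dmat_col (𝔽 : Type*) [Field 𝔽] (m k : ℕ) (a : Fin (m * (m - k))) :
    (fun p => Dmat 𝔽 m k p a) = Pi.single a.modNat 1 := by
  ext p
  simp only [Dmat, Matrix.of_apply, Pi.single_apply, Fin.ext_iff,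
    Fin.coe_modNat]

lemma indep_D (𝔽 : Type*) [Field 𝔽] (m k : ℕ) (B : Finset (Fin (m * (m - k)))) :
    LinearIndepOn 𝔽 (fun a p => Dmat 𝔽 m k p a) (B : Set _) ↔
      Set.InjOn (fun a : Fin (m * (m - k)) => a.modNat) (B : Set _) := by
  constructor
  · intro h a ha b hb hab
    apply h.injOn ha hb
    simp only at hab
    show (fun p => Dmat 𝔽 m k p a) = (fun p => Dmat 𝔽 m k p b)
    rw [Dmat_col, Dmat_col, hab]
  · intro h
    have h1 : LinearIndependent 𝔽 (fun i : Fin (m - k) => (Pi.single i 1 : Fin (m - k) → 𝔽)) :=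
      Pi.linearIndependent_single_one (Fin (m - k)) 𝔽
    have h2 := (h1.linearIndepOn ((fun a : Fin (m * (m - k)) => a.modNat) '' (B : Set _))).comp_of_image h
    have h3 : (fun a p => Dmat 𝔽 m k p a) = (fun i : Fin (m - k) => (Pi.single i 1 : Fin (m - k) → 𝔽)) ∘
      (fun a : Fin (m * (m - k)) => a.modNat) := by
      funext a
      exact Dmat_col 𝔽 m k a
    rw [h3]; exact h2

def Good {𝔽 : Type*} [Field 𝔽] {m n : ℕ} (k : ℕ) (L : Matrix (Fin m) (Fin n) 𝔽)
    (K : Finset (Fin n)) (A : Finset (Fin (m * (m - k)))) : Prop :=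
  LinearIndepOn 𝔽 (Sum.elim (fun a p => L p a) (fun a p => Cmat 𝔽 m k p a)) (K.disjSum A : Finset _)

lemma Good.left {𝔽 : Type*} [Field 𝔽] {m n k : ℕ} {L : Matrix (Fin m) (Fin n) 𝔽}
    {K : Finset (Fin n)} {A : Finset (Fin (m * (m - k)))} (h : Good k L K A) :
    LinearIndepOn 𝔽 (fun a p => L p a) (K : Set (Fin n)) := by
  have h1 : LinearIndepOn 𝔽 (Sum.elim (fun a p => L p a) (fun a p => Cmat 𝔽 m k p a))
      (Sum.inl '' (K : Set (Fin n))) := by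
    refine LinearIndepOn.mono h ?_
    rintro _ ⟨x, hx, rfl⟩
    simpa using hx
  exact h1.comp_of_image Sum.inl_injective.injOn

lemma Good.card_le {𝔽 : Type*} [Field 𝔽] {m n k : ℕ} {L : Matrix (Fin m) (Fin n) 𝔽}
    {K : Finset (Fin n)} {A : Finset (Fin (m * (m - k)))} (h : Good k L K A) :
    K.card + A.card ≤ m := by
  have := LinearIndependent.fintype_card_le_finrank h
  simpa using this

lemma side {𝔽 : Type*} [Field 𝔽] {m n k : ℕ} (hk : k ≤ m) (L : Matrix (Fin m) (Fin n) 𝔽)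
    (K : Finset (Fin n)) (hKk : K.card = k)
    (hK : LinearIndepOn 𝔽 (fun a p => L p a) (K : Set (Fin n))) :
    ∃ Ms : Finset (Fin (m * (m - k))), Good k L K Ms ∧
      Set.InjOn (fun a : Fin (m * (m - k)) => a.modNat) (Ms : Set _) ∧ Ms.card = m - k ∧
      ∀ M : Finset (Fin (m * (m - k))), Good k L K M →
        Set.InjOn (fun a : Fin (m * (m - k)) => a.modNat) (M : Set _) → M.card = m - k →
        M ≠ Ms → ∑ a ∈ Ms, ((a : ℕ) / (m - k) + 1) * ((a : ℕ) % (m - k) + 1) <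
          ∑ a ∈ M, ((a : ℕ) / (m - k) + 1) * ((a : ℕ) % (m - k) + 1) := by
  classical
  obtain ⟨T, hTm, hTi, hTs⟩ := greedy (fun a p => L p a) K hK m le_rfl
  have hfac : Sum.elim (fun a p => L p a) (fun a p => Cmat 𝔽 m k p a) =
      Sum.elim (fun a p => L p a) (fun i : Fin m => (Pi.single i 1 : Fin m → 𝔽)) ∘
        Sum.map id (fun a : Fin (m * (m - k)) => a.divNat) := by
    funext x
    rcases x with x | x
    · rfl
    · exact Cmat_col 𝔽 m k x
  have hTc : T.card = m - k := by
    have h1 := LinearIndependent.fintype_card_le_finrank hTi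
    simp at h1
    have h2 := card_le_of_span (fun i : Fin m => (Pi.single i 1 : Fin m → 𝔽)) _
      (Finset.univ : Finset (Fin m)) _
      ((Pi.linearIndependent_single_one (Fin m) 𝔽).linearIndepOn _)
      (fun i _ => hTs m le_rfl i i.2)
    rw [Finset.filter_true_of_mem hTm] at h2
    simp at h2
    omega
  obtain ⟨Ms, h1, h2, h3, h4, h5⟩ := matching T hTc
  refine ⟨Ms, ?_, h1, h4, ?_⟩
  · unfold Good
    rw [hfac]
    apply LinearIndepOn.comp_of_image
    · refine hTi.mono ?_
      rintro _ ⟨x, hx, rfl⟩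
      rcases x with x | x
      · simpa using hx
      · simp at hx ⊢
        exact h3 x hx
    · intro x hx y hy hxy
      rcases x with x | x <;> rcases y with y | y <;> simp at hx hy hxy ⊢
      · exact hxy
      · exact h2 hx hy hxy
  · intro M hM hMi hMc hne
    refine h5 M hMi hMc ?_ hne
    intro p hp
    have h6 := card_le_of_span (Sum.elim (fun a p => L p a) (fun a p => Cmat 𝔽 m k p a))
      (Sum.elim (fun a p => L p a) (fun i : Fin m => (Pi.single i 1 : Fin m → 𝔽)))
      (K.disjSum (M.filter (fun a : Fin (m * (m - k)) => (a : ℕ) / (m - k) < p)))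
      (K.disjSum (T.filter (fun i : Fin m => (i : ℕ) < p)))
      (LinearIndepOn.mono hM (by
        intro x hx
        rcases x with x | x
        · simpa using hx
        · simp at hx ⊢; exact hx.1))
      (by
        intro x hx
        rcases x with x | x
        · exact Submodule.subset_span ⟨Sum.inl x, by simpa using hx, rfl⟩
        · simp only [Finset.inr_mem_disjSum, Finset.mem_filter] at hx
          simp only [Sum.elim_inr, Cmat_col]
          exact hTs p hp _ hx.2)
    simp only [Finset.card_disjSum] at h6
    omega

lemma split1 {𝔽 : Type*} [Field 𝔽] {m n k : ℕ} (L : Matrix (Fin m) (Fin n) 𝔽)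
    (K : Finset (Fin n)) (A B : Finset (Fin (m * (m - k)))) :
    LinearIndepOn 𝔽 (fun a p => L1aug 𝔽 m n k L p a) (K.disjSum (A.disjSum B) : Finset _) ↔
      Good k L K A ∧ Set.InjOn (fun a : Fin (m * (m - k)) => a.modNat) (B : Set _) := by
  rw [← indep_D 𝔽, Good, linearIndepOn_finset_iff, linearIndepOn_finset_iff,
    linearIndepOn_finset_iff]
  simp only [Finset.sum_disjSum, funext_iff, Pi.add_apply, Finset.sum_apply, Pi.smul_apply,
    Sum.forall, L1aug, Matrix.of_apply, smul_eq_mul, mul_zero,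
    Finset.sum_const_zero, add_zero, zero_add, Pi.zero_apply, Sum.elim_inl, Sum.elim_inr,
    Finset.inl_mem_disjSum, Finset.inr_mem_disjSum]
  constructor
  · intro h
    constructor
    · intro f hf
      have := h (Sum.elim (fun x => f (Sum.inl x)) (Sum.elim (fun x => f (Sum.inr x)) 0))
        ⟨by simpa using hf, by simp⟩
      exact ⟨by simpa using this.1, by simpa using this.2.1⟩
    · intro f hf
      have := h (Sum.elim 0 (Sum.elim 0 f)) ⟨by simp, by simpa using hf⟩
      simpa using this.2.2
  · rintro ⟨h1, h2⟩ f ⟨hf1, hf2⟩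
    have h3 := h1 (Sum.elim (fun x => f (Sum.inl x)) (fun x => f (Sum.inr (Sum.inl x))))
      (by simpa using hf1)
    have h4 := h2 (fun x => f (Sum.inr (Sum.inr x))) hf2
    exact ⟨by simpa using h3.1, by simpa using h3.2, h4⟩

lemma split2 {𝔽 : Type*} [Field 𝔽] {m n k : ℕ} (L : Matrix (Fin m) (Fin n) 𝔽)
    (K : Finset (Fin n)) (A B : Finset (Fin (m * (m - k)))) :
    LinearIndepOn 𝔽 (fun a p => L2aug 𝔽 m n k L p a) (K.disjSum (A.disjSum B) : Finset _) ↔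
      Good k L K B ∧ Set.InjOn (fun a : Fin (m * (m - k)) => a.modNat) (A : Set _) := by
  rw [← indep_D 𝔽, Good, linearIndepOn_finset_iff, linearIndepOn_finset_iff,
    linearIndepOn_finset_iff]
  simp only [Finset.sum_disjSum, funext_iff, Pi.add_apply, Finset.sum_apply, Pi.smul_apply,
    Sum.forall, L2aug, Matrix.of_apply, smul_eq_mul, mul_zero,
    Finset.sum_const_zero, add_zero, zero_add, Pi.zero_apply, Sum.elim_inl, Sum.elim_inr,
    Finset.inl_mem_disjSum, Finset.inr_mem_disjSum]
  constructor
  · intro h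
    constructor
    · intro f hf
      have := h (Sum.elim (fun x => f (Sum.inl x)) (Sum.elim 0 (fun x => f (Sum.inr x))))
        ⟨by simpa using hf, by simp⟩
      exact ⟨by simpa using this.1, by simpa using this.2.2⟩
    · intro f hf
      have := h (Sum.elim 0 (Sum.elim f 0)) ⟨by simp, by simpa using hf⟩
      simpa using this.2.1
  · rintro ⟨h1, h2⟩ f ⟨hf1, hf2⟩
    have h3 := h1 (Sum.elim (fun x => f (Sum.inl x)) (fun x => f (Sum.inr (Sum.inr x))))
      (by simpa using hf1)
    have h4 := h2 (fun x => f (Sum.inr (Sum.inl x))) hf2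
    exact ⟨by simpa using h3.1, h4, by simpa using h3.2⟩

lemma dbl_iff {𝔽 : Type*} [Field 𝔽] {m n k : ℕ} (L₁ L₂ : Matrix (Fin m) (Fin n) 𝔽)
    (K : Finset (Fin n)) (A B : Finset (Fin (m * (m - k)))) :
    DoublyIndep 𝔽 (L1aug 𝔽 m n k L₁) (L2aug 𝔽 m n k L₂) (K.disjSum (A.disjSum B)) ↔
      (Good k L₁ K A ∧ Set.InjOn (fun a : Fin (m * (m - k)) => a.modNat) (B : Set _)) ∧
      (Good k L₂ K B ∧ Set.InjOn (fun a : Fin (m * (m - k)) => a.modNat) (A : Set _)) := by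
  rw [← split1, ← split2]
  rfl

lemma wsum_split {m n k : ℕ} (W : Fin n → ℤ)
    (K : Finset (Fin n)) (A B : Finset (Fin (m * (m - k)))) :
    wsum (Waug m n k W) (K.disjSum (A.disjSum B)) =
      10 * (m : ℤ) ^ 4 * wsum W K +
      ((∑ a ∈ A, ((a : ℕ) / (m - k) + 1) * ((a : ℕ) % (m - k) + 1) : ℕ) : ℤ) +
      ((∑ a ∈ B, ((a : ℕ) / (m - k) + 1) * ((a : ℕ) % (m - k) + 1) : ℕ) : ℤ) := by
  simp only [wsum, Finset.sum_disjSum, Waug, Finset.mul_sum, Nat.cast_sum]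
  ring

lemma weight_le {m k : ℕ} (A : Finset (Fin (m * (m - k)))) (hA : A.card = m - k) :
    ∑ a ∈ A, ((a : ℕ) / (m - k) + 1) * ((a : ℕ) % (m - k) + 1) ≤ m * (m * m) := by
  have h : ∀ a ∈ A, ((a : ℕ) / (m - k) + 1) * ((a : ℕ) % (m - k) + 1) ≤ m * m := by
    intro a _
    have h1 : (a : ℕ) / (m - k) < m := a.divNat.is_lt
    have h2 : (a : ℕ) % (m - k) < m - k := a.modNat.is_lt
    exact Nat.mul_le_mul (by omega) (by omega)
  have := Finset.sum_le_card_nsmul A _ _ h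
  rw [hA, smul_eq_mul] at this
  exact this.trans (Nat.mul_le_mul_right _ (by omega))

lemma injOn_card {m k : ℕ} (B : Finset (Fin (m * (m - k))))
    (h : Set.InjOn (fun a : Fin (m * (m - k)) => a.modNat) (B : Set _)) : B.card ≤ m - k := by
  classical
  rw [← Finset.card_image_of_injOn h]
  simpa using Finset.card_le_univ (B.image (fun a : Fin (m * (m - k)) => a.modNat))

/-- If there is a unique minimum-`W`-weight set `I_k` among the size-`k` doubly independent
subsets of `S` for `(L₁,L₂)`, then there is a unique minimum-`W′`-weight set `I` among the
doubly independent subsets of `S ⊕ (A ⊕ B)` of cardinality `2m − k` for `(L₁′,L₂′)`, and it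
satisfies `I ∩ S = I_k`. -/
theorem unique_min_perfect_extension (𝔽 : Type*) [Field 𝔽] (m n k : ℕ) (hk : k ≤ m)
    (L₁ L₂ : Matrix (Fin m) (Fin n) 𝔽) (W : Fin n → ℤ) (Ik : Finset (Fin n))
    (hIk : DoublyIndep 𝔽 L₁ L₂ Ik ∧ Ik.card = k ∧
      ∀ J : Finset (Fin n), DoublyIndep 𝔽 L₁ L₂ J → J.card = k → J ≠ Ik →
        wsum W Ik < wsum W J) :
    ∃ I : Finset (Fin n ⊕ (Fin (m * (m - k)) ⊕ Fin (m * (m - k)))),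
      (DoublyIndep 𝔽 (L1aug 𝔽 m n k L₁) (L2aug 𝔽 m n k L₂) I ∧ I.card = 2 * m - k ∧
        ∀ J, DoublyIndep 𝔽 (L1aug 𝔽 m n k L₁) (L2aug 𝔽 m n k L₂) J → J.card = 2 * m - k →
          J ≠ I → wsum (Waug m n k W) I < wsum (Waug m n k W) J) ∧
      ∀ e : Fin n, Sum.inl e ∈ I ↔ e ∈ Ik := by
  classical
  obtain ⟨⟨hI1, hI2⟩, hIc, hmin⟩ := hIk
  obtain ⟨A, hA1, hA2, hA3, hA4⟩ := side hk L₁ Ik hIc hI1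
  obtain ⟨B, hB1, hB2, hB3, hB4⟩ := side hk L₂ Ik hIc hI2
  refine ⟨Ik.disjSum (A.disjSum B), ⟨(dbl_iff L₁ L₂ Ik A B).2 ⟨⟨hA1, hB2⟩, hB1, hA2⟩, ?_, ?_⟩, ?_⟩
  · simp only [Finset.card_disjSum]; omega
  · intro J hJ hJc hne
    obtain ⟨K, R, rfl⟩ : ∃ K R, J = K.disjSum R :=
      ⟨J.toLeft, J.toRight, Finset.toLeft_disjSum_toRight.symm⟩
    obtain ⟨A', B', rfl⟩ : ∃ A' B', R = A'.disjSum B' :=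
      ⟨R.toLeft, R.toRight, Finset.toLeft_disjSum_toRight.symm⟩
    obtain ⟨⟨g1, i1⟩, g2, i2⟩ := (dbl_iff L₁ L₂ K A' B').1 hJ
    simp only [Finset.card_disjSum] at hJc
    have c1 := g1.card_le
    have c2 := g2.card_le
    have c3 := injOn_card _ i1
    have c4 := injOn_card _ i2
    have cA : A'.card = m - k := by omega
    have cB : B'.card = m - k := by omega
    have cK : K.card = k := by omega
    rw [wsum_split, wsum_split]
    by_cases hKI : K = Ik
    · subst hKI
      by_cases hAA : A' = A
      · subst hAA
        have hBB : B' ≠ B := by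
          rintro rfl
          exact hne rfl
        have := hB4 B' g2 i1 cB hBB
        zify at this ⊢
        linarith
      · have h1 := hA4 A' g1 i2 cA hAA
        have h2 : ∑ a ∈ B, ((a : ℕ) / (m - k) + 1) * ((a : ℕ) % (m - k) + 1) ≤
            ∑ a ∈ B', ((a : ℕ) / (m - k) + 1) * ((a : ℕ) % (m - k) + 1) := by
          by_cases hBB : B' = B
          · rw [hBB]
          · exact (hB4 B' g2 i1 cB hBB).le
        zify at h1 h2 ⊢
        linarith
    · have h1 := hmin K ⟨g1.left, g2.left⟩ cK hKI
      have hm : 0 < m := by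
        rcases Nat.eq_zero_or_pos m with h0 | h0
        · exfalso
          apply hKI
          have hk0 : k = 0 := by omega
          rw [Finset.card_eq_zero.1 (cK.trans hk0), Finset.card_eq_zero.1 (hIc.trans hk0)]
        · exact h0
      have wA := weight_le A hA3
      have wB := weight_le B hB3
      generalize (∑ a ∈ A, ((a : ℕ) / (m - k) + 1) * ((a : ℕ) % (m - k) + 1)) = x at *
      generalize (∑ a ∈ B, ((a : ℕ) / (m - k) + 1) * ((a : ℕ) % (m - k) + 1)) = y at *
      generalize (∑ a ∈ A', ((a : ℕ) / (m - k) + 1) * ((a : ℕ) % (m - k) + 1)) = x' at *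
      generalize (∑ a ∈ B', ((a : ℕ) / (m - k) + 1) * ((a : ℕ) % (m - k) + 1)) = y' at *
      have hx' : (0 : ℤ) ≤ x' := Int.natCast_nonneg _
      have hy' : (0 : ℤ) ≤ y' := Int.natCast_nonneg _
      zify at wA wB hm
      have hm1 : (1 : ℤ) ≤ m := hm
      have h3 : (m : ℤ) * (m * m) ≤ (m : ℤ) ^ 4 := by
        have : (0 : ℤ) ≤ m * (m * m) := by positivity
        nlinarith
      have h4 : (0 : ℤ) < (m : ℤ) ^ 4 := by positivity
      have h5 : 10 * (m : ℤ) ^ 4 * (wsum W Ik + 1) ≤ 10 * (m : ℤ) ^ 4 * wsum W K :=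
        mul_le_mul_of_nonneg_left (by linarith) (by positivity)
      linarith
  · intro e
    simp
end
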